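/- Let a ≥ 0 and let (q,r) be an a-admissible pair, with conjugate exponents q', r'. There exists a constant C(a,r) > 0 such that for every F ∈ 𝕊⁺ one has the restriction estimate (∫₀^∞ |𝓗̃_{(a−1)/2}(F)(ξ, −ξ²/(2π))|² ξ^a dξ)^{1/2} ≤ C(a,r) ‖F‖_{L^{q'}_t L^{r'}_a}. -/

import Mathlib

open MeasureTheory Filter Set

noncomputable def besselJ (ν : ℂ) (z : ℝ) : ℂ :=
  ∑' k : ℕ, ((-1 : ℂ) ^ k / (Complex.Gamma (k + 1) * Complex.Gamma (ν + k + 1))) *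
    ((z : ℂ) / 2) ^ (2 * (k : ℂ) + ν)

noncomputable def hankel (ν : ℂ) (φ : ℝ → ℂ) (x : ℝ) : ℂ :=
  (x : ℂ) ^ (-ν) * ∫ y in Ioi (0:ℝ), φ y * besselJ ν (x * y) * (y : ℂ) ^ (ν + 1)

noncomputable def LrA (a r : ℝ) (f : ℝ → ℂ) : ℝ :=
  (∫ x in Ioi (0:ℝ), ‖f x‖ ^ r * x ^ a) ^ (1 / r)

noncomputable def mixedNorm (a q r : ℝ) (u : ℝ → ℝ → ℂ) : ℝ :=
  (∫ t : ℝ, LrA a r (fun x => u x t) ^ q) ^ (1 / q)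

def Admissible (a q r : ℝ) : Prop :=
  2 < r ∧ (1 < a → r < 2 * (a + 1) / (a - 1)) ∧ 2 / q = (a + 1) * (1 / 2 - 1 / r)

noncomputable def DxIter : ℕ → (ℝ → ℝ → ℂ) → (ℝ → ℝ → ℂ)
  | 0, F => F
  | k + 1, F => fun x t => (1 / (x : ℂ)) * deriv (fun x' => DxIter k F x' t) x

noncomputable def DtIter (l : ℕ) (F : ℝ → ℝ → ℂ) : ℝ → ℝ → ℂ :=
  fun x t => iteratedDeriv l (fun t' => F x t') t

def SPlusT (F : ℝ → ℝ → ℂ) : Prop :=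
  ContDiffOn ℝ (⊤ : ℕ∞) (fun p : ℝ × ℝ => F p.1 p.2) (Ioi 0 ×ˢ univ) ∧
  ∀ p : ℕ, ∃ C : ℝ, ∀ k l : ℕ, k + l ≤ p → ∀ x > (0:ℝ), ∀ t : ℝ,
    (1 + x ^ 2 + t ^ 2) ^ ((p : ℝ) / 2) * ‖DxIter k (DtIter l F) x t‖ ≤ C

noncomputable def fourierHankel (ν : ℂ) (u : ℝ → ℝ → ℂ) (ξ τ : ℝ) : ℂ :=
  ∫ t : ℝ, Complex.exp (-(((2 * Real.pi * τ * t : ℝ)) : ℂ) * Complex.I) *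
    hankel ν (fun x => u x t) ξ

/-!
With `S v = parabolaTransform a v`, the quantity `‖S v‖²` in `L²(x^a dx)` is a double time integral
of `∫ exp(i (t - t') ξ²) 𝓗(v t)(ξ) conj 𝓗(v t')(ξ) ξ^a dξ` (the `TT*` method). The multiplier
`exp(-p ξ²)` has an explicit kernel by Weber's second exponential integral, bounded by a multiple of
`|p|^(-(a+1)/2)`, and its `L²` norm is controlled by Schur's test for real `p`. Marcinkiewicz
interpolation between the two gives the decay `|t - t'|^(-2/q)` from `L^r'` to `L^r`, and the
Hardy–Littlewood–Sobolev inequality in time concludes. The Gaussian factor `exp(-ε ξ²)`, removed at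
the end by Fatou's lemma, keeps every integral absolutely convergent.
-/

/-- The coefficients of `besselE`. -/
noncomputable def besselCoeff (b : ℝ) (k : ℕ) : ℝ :=
  ((k.factorial : ℝ) * Real.Gamma (b + k))⁻¹

/-- The entire function `∑ wᵏ / (k! Γ(b + k))`, through which the Bessel function is
`J_ν(z) = (z / 2) ^ ν * besselE (ν + 1) (-(z ^ 2 / 4))`. -/
noncomputable def besselE (b : ℝ) (w : ℂ) : ℂ :=
  ∑' k : ℕ, (besselCoeff b k : ℂ) * w ^ k

lemma Gamma_add_nat_pos {b : ℝ} (hb : 0 < b) (k : ℕ) : 0 < Real.Gamma (b + k) :=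
  Real.Gamma_pos_of_pos (by positivity)

lemma Gamma_add_nat_eq_ascPochhammer_mul {b : ℝ} (hb : 0 < b) (k : ℕ) :
    Real.Gamma (b + k) = (ascPochhammer ℝ k).eval b * Real.Gamma b := by
  induction k with
  | zero => simp
  | succ k ih =>
    rw [Nat.cast_succ, ← add_assoc, Real.Gamma_add_one (by positivity), ih,
      ascPochhammer_succ_eval]
    ring

lemma pow_mul_Gamma_le_Gamma_add_nat {b : ℝ} (hb : 0 < b) (k : ℕ) :
    b ^ k * Real.Gamma b ≤ Real.Gamma (b + k) := by
  induction k with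
  | zero => simp
  | succ k ih =>
    have : (0 : ℝ) ≤ k := k.cast_nonneg
    rw [Nat.cast_succ, ← add_assoc, Real.Gamma_add_one (by positivity), pow_succ', mul_assoc]
    have := (Gamma_add_nat_pos hb k).le
    gcongr
    linarith

lemma besselCoeff_pos {b : ℝ} (hb : 0 < b) (k : ℕ) : 0 < besselCoeff b k := by
  have := Gamma_add_nat_pos hb k
  unfold besselCoeff
  positivity

lemma besselCoeff_le {b : ℝ} (hb : 0 < b) (k : ℕ) :
    besselCoeff b k ≤ (Real.Gamma b)⁻¹ * (b⁻¹ ^ k / k.factorial) := by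
  have := Real.Gamma_pos_of_pos hb
  calc besselCoeff b k ≤ ((k.factorial : ℝ) * (b ^ k * Real.Gamma b))⁻¹ := by
        unfold besselCoeff
        gcongr
        exact pow_mul_Gamma_le_Gamma_add_nat hb k
    _ = _ := by rw [mul_inv_rev, mul_inv_rev, inv_pow]; ring

lemma summable_besselCoeff_mul_pow {b : ℝ} (hb : 0 < b) {x : ℝ} (hx : 0 ≤ x) :
    Summable fun k => besselCoeff b k * x ^ k := by
  refine Summable.of_nonneg_of_le
    (fun k => mul_nonneg (besselCoeff_pos hb k).le (by positivity)) (fun k => ?_)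
    ((Real.summable_pow_div_factorial (b⁻¹ * x)).mul_left (Real.Gamma b)⁻¹)
  calc besselCoeff b k * x ^ k
      ≤ (Real.Gamma b)⁻¹ * (b⁻¹ ^ k / k.factorial) * x ^ k := by
        gcongr
        exact besselCoeff_le hb k
    _ = _ := by rw [mul_pow]; ring

lemma norm_besselCoeff_mul_pow {b : ℝ} (hb : 0 < b) (w : ℂ) (k : ℕ) :
    ‖(besselCoeff b k : ℂ) * w ^ k‖ = besselCoeff b k * ‖w‖ ^ k := by
  rw [norm_mul, norm_pow, Complex.norm_real, Real.norm_of_nonneg (besselCoeff_pos hb k).le]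

lemma summable_norm_besselCoeff_mul_pow {b : ℝ} (hb : 0 < b) (w : ℂ) :
    Summable fun k => ‖(besselCoeff b k : ℂ) * w ^ k‖ := by
  simp_rw [norm_besselCoeff_mul_pow hb]
  exact summable_besselCoeff_mul_pow hb (norm_nonneg w)

lemma hasSum_besselE {b : ℝ} (hb : 0 < b) (w : ℂ) :
    HasSum (fun k => (besselCoeff b k : ℂ) * w ^ k) (besselE b w) :=
  (summable_norm_besselCoeff_mul_pow hb w).of_norm.hasSum

lemma Gamma_half_add_nat_mul (k : ℕ) :
    Real.Gamma (1 / 2 + k) * (4 ^ k * k.factorial) = (2 * k).factorial * Real.Gamma (1 / 2) := by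
  induction k with
  | zero => simp
  | succ k ih =>
    rw [Nat.cast_succ, ← add_assoc, Real.Gamma_add_one (by positivity), mul_add_one,
      Nat.factorial_succ, Nat.factorial_succ, Nat.factorial_succ]
    push_cast
    linear_combination (2 * (k : ℝ) + 2) * (2 * k + 1) * ih

open ProbabilityTheory in
lemma betaPDFReal_nonneg {α β : ℝ} (hα : 0 < α) (hβ : 0 < β) (s : ℝ) :
    0 ≤ betaPDFReal α β s := by
  by_cases hs : 0 < s ∧ s < 1
  · exact (betaPDFReal_pos hs.1 hs.2 hα hβ).le
  · simp [betaPDFReal, hs]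

open ProbabilityTheory in
lemma measurable_betaPDF (α β : ℝ) : Measurable (betaPDF α β) :=
  (measurable_betaPDFReal α β).ennreal_ofReal

open ProbabilityTheory in
lemma integral_betaPDFReal {α β : ℝ} (hα : 0 < α) (hβ : 0 < β) :
    ∫ s, betaPDFReal α β s = 1 := by
  rw [integral_eq_lintegral_of_nonneg_ae (ae_of_all _ (betaPDFReal_nonneg hα hβ))
    (measurable_betaPDFReal α β).aestronglyMeasurable]
  exact (congrArg _ (lintegral_betaPDF_eq_one hα hβ)).trans ENNReal.toReal_one

open ProbabilityTheory in
lemma betaPDFReal_mul_pow {α β : ℝ} (hα : 0 < α) (hβ : 0 < β) (k : ℕ) (s : ℝ) :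
    betaPDFReal α β s * s ^ k = beta (α + k) β / beta α β * betaPDFReal (α + k) β s := by
  by_cases hs : 0 < s ∧ s < 1
  · have h₁ := (beta_pos hα hβ).ne'
    have h₂ := (beta_pos (show 0 < α + k by positivity) hβ).ne'
    simp only [betaPDFReal, hs, and_self, if_true]
    rw [add_sub_right_comm, Real.rpow_add_natCast hs.1.ne']
    field_simp
  · simp [betaPDFReal, hs]

open ProbabilityTheory in
lemma integral_pow_betaMeasure {α β : ℝ} (hα : 0 < α) (hβ : 0 < β) (k : ℕ) :
    ∫ s, s ^ k ∂betaMeasure α β = beta (α + k) β / beta α β := by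
  rw [betaMeasure, integral_withDensity_eq_integral_toReal_smul
    (measurable_betaPDF α β) (ae_of_all _ fun _ => ENNReal.ofReal_lt_top)]
  simp_rw [betaPDF, ENNReal.toReal_ofReal (betaPDFReal_nonneg hα hβ _), smul_eq_mul,
    betaPDFReal_mul_pow hα hβ]
  rw [integral_const_mul, integral_betaPDFReal (by positivity) hβ, mul_one]

open ProbabilityTheory in
lemma ae_mem_Icc_betaMeasure (α β : ℝ) : ∀ᵐ s ∂betaMeasure α β, s ∈ Icc (0 : ℝ) 1 := by
  rw [betaMeasure, ae_withDensity_iff (measurable_betaPDF α β)]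
  refine ae_of_all _ fun s hs => ⟨?_, ?_⟩ <;> by_contra! h
  · exact hs (betaPDF_eq_zero_of_nonpos h.le)
  · exact hs (betaPDF_eq_zero_of_one_le h.le)

lemma exists_measure_moments_Gamma_ratio {α b : ℝ} (hα : 0 < α) (hαb : α ≤ b) :
    ∃ ρ : Measure ℝ, IsProbabilityMeasure ρ ∧ (∀ᵐ s ∂ρ, s ∈ Icc (0 : ℝ) 1) ∧
      ∀ k : ℕ, ∫ s, s ^ k ∂ρ =
        Real.Gamma (α + k) * Real.Gamma b / (Real.Gamma α * Real.Gamma (b + k)) := by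
  have := Real.Gamma_pos_of_pos hα
  rcases hαb.eq_or_lt with rfl | hαb
  · refine ⟨Measure.dirac 1, inferInstance, by simp [ae_dirac_eq], fun k => ?_⟩
    have := Gamma_add_nat_pos hα k
    rw [integral_dirac, one_pow, mul_comm, div_self (by positivity)]
  · have hβ : 0 < b - α := sub_pos.2 hαb
    refine ⟨ProbabilityTheory.betaMeasure α (b - α),
      ProbabilityTheory.isProbabilityMeasureBeta hα hβ, ae_mem_Icc_betaMeasure _ _, fun k => ?_⟩
    have := Real.Gamma_pos_of_pos hβ
    have hΓb := Real.Gamma_pos_of_pos (hα.trans hαb)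
    have hΓbk := Gamma_add_nat_pos (hα.trans hαb) k
    rw [integral_pow_betaMeasure hα hβ, ProbabilityTheory.beta, ProbabilityTheory.beta,
      add_sub_cancel, show α + k + (b - α) = b + k by ring]
    field_simp

lemma norm_cosh_le_exp_abs_re (z : ℂ) : ‖Complex.cosh z‖ ≤ Real.exp |z.re| := by
  have h := norm_add_le (Complex.exp z) (Complex.exp (-z))
  rw [Complex.norm_exp, Complex.norm_exp, Complex.neg_re] at h
  have h₁ := Real.exp_le_exp.2 (le_abs_self z.re)
  have h₂ := Real.exp_le_exp.2 (neg_le_abs z.re)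
  rw [Complex.cosh, norm_div, Complex.norm_ofNat]
  linarith

lemma sqrt_mem_Icc_of_mem_Icc {s : ℝ} (hs : s ∈ Icc (0 : ℝ) 1) : √s ∈ Icc (0 : ℝ) 1 :=
  ⟨Real.sqrt_nonneg s, Real.sqrt_le_one.2 hs.2⟩

lemma integral_cosh_mul_sqrt_eq_tsum {ρ : Measure ℝ} [IsProbabilityMeasure ρ]
    (hρ : ∀ᵐ s ∂ρ, s ∈ Icc (0 : ℝ) 1) (z : ℂ) :
    ∫ s, Complex.cosh (z * √s) ∂ρ =
      ∑' k : ℕ, z ^ (2 * k) / (2 * k).factorial * (∫ s, s ^ k ∂ρ : ℝ) := by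
  have hint (k : ℕ) : ∫ s, (z * √s) ^ (2 * k) / ((2 * k).factorial : ℂ) ∂ρ =
      z ^ (2 * k) / (2 * k).factorial * (∫ s, s ^ k ∂ρ : ℝ) := by
    rw [← integral_complex_ofReal, ← integral_const_mul]
    refine integral_congr_ae (hρ.mono fun s hs => ?_)
    simp only [mul_pow, pow_mul (√s : ℂ), ← Complex.ofReal_pow √s, Real.sq_sqrt hs.1]
    push_cast
    ring
  simp_rw [← hint]
  refine (hasSum_integral_of_dominated_convergence
    (fun k _ => ‖z‖ ^ (2 * k) / (2 * k).factorial) (fun k => ?_) (fun k => ?_)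
    (ae_of_all _ fun _ => ?_) (integrable_const _)
    (ae_of_all _ fun _ => Complex.hasSum_cosh _)).tsum_eq.symm
  · exact Measurable.aestronglyMeasurable (by fun_prop)
  · filter_upwards [hρ] with s hs
    have hle := mul_le_of_le_one_right (norm_nonneg z) (sqrt_mem_Icc_of_mem_Icc hs).2
    rw [norm_div, norm_pow, norm_mul, Complex.norm_natCast, Complex.norm_real,
      Real.norm_of_nonneg (Real.sqrt_nonneg s)]
    gcongr
  · exact (Real.summable_pow_div_factorial ‖z‖).comp_injective
      (mul_right_injective₀ (two_ne_zero (α := ℕ)))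

/-- The Poisson integral representation. -/
lemma exists_besselE_eq_integral_cosh {b : ℝ} (hb : 1 / 2 ≤ b) :
    ∃ ρ : Measure ℝ, IsProbabilityMeasure ρ ∧ (∀ᵐ s ∂ρ, s ∈ Icc (0 : ℝ) 1) ∧
      ∀ z : ℂ, besselE b (z ^ 2 / 4) =
        (Real.Gamma b : ℂ)⁻¹ * ∫ s, Complex.cosh (z * √s) ∂ρ := by
  obtain ⟨ρ, hρ, hsupp, hmom⟩ := exists_measure_moments_Gamma_ratio one_half_pos hb
  refine ⟨ρ, hρ, hsupp, fun z => ?_⟩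
  have hb0 : 0 < b := one_half_pos.trans_le hb
  have hcoeff (k : ℕ) : besselCoeff b k = (Real.Gamma b)⁻¹ * (4 ^ k * (∫ s, s ^ k ∂ρ) /
      (2 * k).factorial) := by
    have h₁ : Real.Gamma (1 / 2) ≠ 0 := (Real.Gamma_pos_of_pos one_half_pos).ne'
    have h₂ := (Real.Gamma_pos_of_pos hb0).ne'
    have h₃ := (Gamma_add_nat_pos hb0 k).ne'
    have h₄ := Gamma_half_add_nat_mul k
    rw [hmom, besselCoeff]
    generalize Real.Gamma (1 / 2 + k) = g at *
    field_simp
    linear_combination (-1 : ℝ) * h₄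
  rw [integral_cosh_mul_sqrt_eq_tsum hsupp, besselE, ← tsum_mul_left]
  refine tsum_congr fun k => ?_
  rw [hcoeff, div_pow, ← pow_mul]
  push_cast
  field_simp

lemma norm_besselE_sq_div_four_le {b : ℝ} (hb : 1 / 2 ≤ b) (z : ℂ) :
    ‖besselE b (z ^ 2 / 4)‖ ≤ (Real.Gamma b)⁻¹ * Real.exp |z.re| := by
  obtain ⟨ρ, hρ, hsupp, hrep⟩ := exists_besselE_eq_integral_cosh hb
  have hΓ : 0 < Real.Gamma b := Real.Gamma_pos_of_pos (one_half_pos.trans_le hb)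
  have hcosh : ‖∫ s, Complex.cosh (z * √s) ∂ρ‖ ≤ Real.exp |z.re| * ρ.real univ := by
    refine norm_integral_le_of_norm_le_const (hsupp.mono fun s hs => ?_)
    refine (norm_cosh_le_exp_abs_re _).trans (Real.exp_le_exp.2 ?_)
    rw [Complex.re_mul_ofReal, abs_mul, abs_of_nonneg (Real.sqrt_nonneg s)]
    exact mul_le_of_le_one_right (abs_nonneg _) (sqrt_mem_Icc_of_mem_Icc hs).2
  rw [hrep, norm_mul, norm_inv, Complex.norm_real, Real.norm_of_nonneg hΓ.le]
  gcongr
  simpa using hcosh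

lemma multichoose_eq_Gamma_div {b : ℝ} (hb : 0 < b) (k : ℕ) :
    Ring.multichoose b k = Real.Gamma (b + k) / (k.factorial * Real.Gamma b) := by
  have h := Ring.factorial_nsmul_multichoose_eq_ascPochhammer b k
  rw [Polynomial.ascPochhammer_smeval_eq_eval, nsmul_eq_mul] at h
  have hΓ := (Real.Gamma_pos_of_pos hb).ne'
  rw [Gamma_add_nat_eq_ascPochhammer_mul hb, ← h]
  field_simp

lemma Gamma_mul_besselCoeff_mul_besselCoeff {b : ℝ} (hb : 0 < b) (m n : ℕ) :
    Real.Gamma (b + m + n) * besselCoeff b m * besselCoeff b n =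
      ∑ k ∈ Finset.range (m + 1), besselCoeff b k * (m.descFactorial k / m.factorial) *
        (n.descFactorial k / n.factorial) := by
  have hvand := Ring.add_choose_eq m (Commute.all (n : ℝ) (b + m - 1))
  rw [show (n : ℝ) + (b + m - 1) = b + n + m - 1 by ring, ← Ring.multichoose_eq,
    multichoose_eq_Gamma_div (by positivity), Finset.Nat.sum_antidiagonal_eq_sum_range_succ_mk,
    add_right_comm] at hvand
  have hm := (Gamma_add_nat_pos hb m).ne'
  have hn := (Gamma_add_nat_pos hb n).ne'
  have hterm : ∀ k ∈ Finset.range (m + 1),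
      Ring.choose (n : ℝ) k * Ring.choose (b + m - 1) (m - k) =
        Real.Gamma (b + m) * n.factorial *
          (besselCoeff b k * (m.descFactorial k / m.factorial) *
            (n.descFactorial k / n.factorial)) := fun k hk => by
    have hkm : k ≤ m := Finset.mem_range_succ_iff.1 hk
    have hmk : b + m - 1 = b + k + (m - k : ℕ) - 1 := by rw [Nat.cast_sub hkm]; ring
    have hk := (Gamma_add_nat_pos hb k).ne'
    rw [Ring.choose_natCast, hmk, ← Ring.multichoose_eq, multichoose_eq_Gamma_div (by positivity),
      Nat.cast_sub hkm, add_add_sub_cancel, Nat.descFactorial_eq_factorial_mul_choose n,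
      ← Nat.factorial_mul_descFactorial hkm, besselCoeff]
    have : m.descFactorial k ≠ 0 := by simpa [Nat.descFactorial_eq_zero_iff_lt] using hkm
    push_cast
    field_simp
  rw [Finset.sum_congr rfl hterm, ← Finset.mul_sum] at hvand
  rw [besselCoeff, besselCoeff]
  field_simp at hvand ⊢
  linear_combination hvand

lemma hasSum_descFactorial_div_factorial_mul_pow {𝕜 : Type*} [RCLike 𝕜] (k : ℕ) (w : 𝕜) :
    HasSum (fun m : ℕ => (m.descFactorial k : 𝕜) / m.factorial * w ^ m)
      (w ^ k * NormedSpace.exp w) := by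
  have hzero : ∑ m ∈ Finset.range k, (m.descFactorial k : 𝕜) / m.factorial * w ^ m = 0 :=
    Finset.sum_eq_zero fun m hm => by
      simp [Nat.descFactorial_of_lt (Finset.mem_range.1 hm)]
  rw [← hasSum_nat_add_iff' k, hzero, sub_zero]
  refine ((NormedSpace.expSeries_div_hasSum_exp w).mul_left (w ^ k)).congr_fun fun m => ?_
  have h := Nat.factorial_mul_descFactorial (Nat.le_add_left k m)
  rw [Nat.add_sub_cancel] at h
  have : (m + k).descFactorial k ≠ 0 := by simp [Nat.descFactorial_eq_zero_iff_lt]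
  rw [← h, pow_add]
  push_cast
  field_simp

lemma hasSum_descFactorial_mul_pow_mul_descFactorial_mul_pow {𝕜 : Type*} [RCLike 𝕜] (k : ℕ)
    (X Y : 𝕜) :
    HasSum (fun q : ℕ × ℕ => ((q.1.descFactorial k : 𝕜) / q.1.factorial * X ^ q.1) *
        ((q.2.descFactorial k : 𝕜) / q.2.factorial * Y ^ q.2))
      ((X * Y) ^ k * (NormedSpace.exp X * NormedSpace.exp Y)) := by
  have hnorm (w : 𝕜) : Summable fun m : ℕ => ‖(m.descFactorial k : 𝕜) / m.factorial * w ^ m‖ :=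
    (hasSum_descFactorial_div_factorial_mul_pow k ‖w‖).summable.congr fun m => by simp
  have hmul := (hasSum_descFactorial_div_factorial_mul_pow k X).mul
    (hasSum_descFactorial_div_factorial_mul_pow k Y)
  have hsummable := summable_mul_of_summable_norm (hnorm X) (hnorm Y)
  rw [mul_pow, mul_mul_mul_comm]
  exact hmul hsummable

lemma summable_besselCoeff_mul_descFactorial_mul_pow {b : ℝ} (hb : 0 < b) (X Y : ℂ) :
    Summable fun p : ℕ × ℕ × ℕ => (besselCoeff b p.1 : ℂ) *
      (((p.2.1.descFactorial p.1 : ℂ) / p.2.1.factorial * X ^ p.2.1) *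
        ((p.2.2.descFactorial p.1 : ℂ) / p.2.2.factorial * Y ^ p.2.2)) := by
  suffices h : Summable fun p : ℕ × ℕ × ℕ => besselCoeff b p.1 *
      (((p.2.1.descFactorial p.1 : ℝ) / p.2.1.factorial * ‖X‖ ^ p.2.1) *
        ((p.2.2.descFactorial p.1 : ℝ) / p.2.2.factorial * ‖Y‖ ^ p.2.2)) from
    (h.congr fun p => by simp [abs_of_pos (besselCoeff_pos hb p.1)]).of_norm
  have hfib (k : ℕ) := (hasSum_descFactorial_mul_pow_mul_descFactorial_mul_pow k ‖X‖ ‖Y‖).mul_left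
    (besselCoeff b k)
  refine (summable_prod_of_nonneg fun p => ?_).2 ⟨fun k => (hfib k).summable, ?_⟩
  · have := besselCoeff_pos hb p.1
    dsimp only [Pi.zero_apply]
    positivity
  · simp_rw [(hfib _).tsum_eq, ← mul_assoc]
    exact ((summable_besselCoeff_mul_pow hb (by positivity)).mul_right _).mul_right _

/-- The double series behind Weber's second exponential integral. -/
lemma hasSum_Gamma_mul_besselCoeff_mul_pow {b : ℝ} (hb : 0 < b) (X Y : ℂ) :
    HasSum (fun p : ℕ × ℕ => ((Real.Gamma (b + p.1 + p.2) * besselCoeff b p.1 *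
        besselCoeff b p.2 : ℝ) : ℂ) * (X ^ p.1 * Y ^ p.2))
      (Complex.exp (X + Y) * besselE b (X * Y)) := by
  have hT := (summable_besselCoeff_mul_descFactorial_mul_pow hb X Y).hasSum
  have hfst := hT.prod_fiberwise fun k =>
    (hasSum_descFactorial_mul_pow_mul_descFactorial_mul_pow k X Y).mul_left (besselCoeff b k : ℂ)
  simp only [← mul_assoc _ ((X * Y) ^ _)] at hfst
  have hsnd := ((Equiv.prodComm _ _).hasSum_iff.2 hT).prod_fiberwise
    (g := fun q : ℕ × ℕ => ((Real.Gamma (b + q.1 + q.2) * besselCoeff b q.1 *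
      besselCoeff b q.2 : ℝ) : ℂ) * (X ^ q.1 * Y ^ q.2)) fun q => by
    rw [Gamma_mul_besselCoeff_mul_besselCoeff hb, Complex.ofReal_sum, Finset.sum_mul]
    refine (hasSum_sum_of_ne_finset_zero fun k hk => ?_).congr_fun fun k => ?_
    · have : q.1 < k := by simpa [Nat.lt_succ_iff] using hk
      simp [Nat.descFactorial_of_lt this]
    · simp only [Function.comp_apply, Equiv.prodComm_apply, Prod.fst_swap, Prod.snd_swap]
      push_cast
      ring
  rwa [hfst.unique ((hasSum_besselE hb (X * Y)).mul_right _), ← Complex.exp_eq_exp_ℂ,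
    ← Complex.exp_add, mul_comm] at hsnd

/-- The measure `x ^ a dx` on the half-line. -/
noncomputable def powMeasure (a : ℝ) : Measure ℝ :=
  (volume.restrict (Ioi 0)).withDensity fun x => ENNReal.ofReal (x ^ a)

instance (a : ℝ) : SFinite (powMeasure a) := by
  unfold powMeasure
  infer_instance

lemma ae_powMeasure_pos (a : ℝ) : ∀ᵐ x ∂powMeasure a, 0 < x :=
  (withDensity_absolutelyContinuous _ _).ae_le (ae_restrict_mem measurableSet_Ioi)

lemma integral_powMeasure {E : Type*} [NormedAddCommGroup E] [NormedSpace ℝ E] (a : ℝ)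
    (f : ℝ → E) : ∫ x, f x ∂powMeasure a = ∫ x in Ioi (0 : ℝ), x ^ a • f x := by
  rw [powMeasure, integral_withDensity_eq_integral_toReal_smul (by fun_prop)
    (ae_of_all _ fun _ => ENNReal.ofReal_lt_top)]
  exact setIntegral_congr_fun measurableSet_Ioi fun x hx => by
    simp only [ENNReal.toReal_ofReal (Real.rpow_nonneg (mem_Ioi.1 hx).le a)]

lemma integrable_powMeasure_iff {E : Type*} [NormedAddCommGroup E] [NormedSpace ℝ E] (a : ℝ)
    {f : ℝ → E} :
    Integrable f (powMeasure a) ↔ IntegrableOn (fun x : ℝ => x ^ a • f x) (Ioi 0) := by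
  rw [powMeasure, integrable_withDensity_iff_integrable_smul' (by fun_prop)
    (ae_of_all _ fun _ => ENNReal.ofReal_lt_top)]
  exact integrableOn_congr_fun (fun x hx => by
    simp only [ENNReal.toReal_ofReal (Real.rpow_nonneg (mem_Ioi.1 hx).le a)]) measurableSet_Ioi

lemma rpow_add_natCast_smul {E : Type*} [AddCommGroup E] [Module ℝ E] (a : ℝ) (n : ℕ) {x : ℝ}
    (hx : 0 < x) (v : E) : x ^ (a + n) • v = x ^ a • x ^ n • v := by
  rw [smul_smul, Real.rpow_add_natCast hx.ne']

lemma integrable_pow_smul_powMeasure_iff {E : Type*} [NormedAddCommGroup E] [NormedSpace ℝ E]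
    (a : ℝ) (n : ℕ) {f : ℝ → E} :
    Integrable (fun x : ℝ => x ^ n • f x) (powMeasure a) ↔ Integrable f (powMeasure (a + n)) := by
  rw [integrable_powMeasure_iff, integrable_powMeasure_iff]
  exact integrableOn_congr_fun (fun x hx => (rpow_add_natCast_smul a n hx _).symm)
    measurableSet_Ioi

lemma integral_pow_smul_powMeasure {E : Type*} [NormedAddCommGroup E] [NormedSpace ℝ E]
    (a : ℝ) (n : ℕ) (f : ℝ → E) :
    ∫ x, x ^ n • f x ∂powMeasure a = ∫ x, f x ∂powMeasure (a + n) := by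
  rw [integral_powMeasure, integral_powMeasure]
  exact setIntegral_congr_fun measurableSet_Ioi
    fun x hx => (rpow_add_natCast_smul a n hx _).symm

lemma integrable_exp_neg_mul_sq_powMeasure {a : ℝ} (ha : -1 < a) {p : ℝ} (hp : 0 < p) :
    Integrable (fun x : ℝ => Real.exp (-p * x ^ 2)) (powMeasure a) :=
  (integrable_powMeasure_iff a).2 (integrableOn_rpow_mul_exp_neg_mul_sq hp ha)

lemma integral_exp_neg_mul_sq_powMeasure {a : ℝ} (ha : -1 < a) {p : ℝ} (hp : 0 < p) :
    ∫ x, Real.exp (-p * x ^ 2) ∂powMeasure a =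
      1 / 2 * p ^ (-((a + 1) / 2)) * Real.Gamma ((a + 1) / 2) := by
  have h := integral_rpow_mul_exp_neg_mul_rpow (p := 2) two_pos ha hp
  simp only [Real.rpow_two] at h
  rw [integral_powMeasure]
  simp only [smul_eq_mul]
  rw [h, neg_div]
  ring

lemma integrable_cexp_neg_mul_sq_powMeasure {a : ℝ} (ha : -1 < a) {p : ℂ} (hp : 0 < p.re) :
    Integrable (fun x : ℝ => Complex.exp (-p * (x : ℂ) ^ 2)) (powMeasure a) :=
  (integrable_exp_neg_mul_sq_powMeasure ha hp).mono'
    (Continuous.aestronglyMeasurable (by fun_prop))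
    (ae_of_all _ fun x => (norm_cexp_neg_mul_sq p x).le)

lemma eqOn_re_pos_of_eq_ofReal {f g : ℂ → ℂ} (hf : DifferentiableOn ℂ f {z | 0 < z.re})
    (hg : DifferentiableOn ℂ g {z | 0 < z.re}) (h : ∀ x : ℝ, 0 < x → f x = g x) :
    EqOn f g {z | 0 < z.re} := by
  have hopen : IsOpen {z : ℂ | 0 < z.re} := isOpen_lt continuous_const Complex.continuous_re
  have htendsto : Tendsto (fun x : ℝ => (x : ℂ)) (nhdsWithin 1 (Ioi 1))
      (nhdsWithin (1 : ℂ) {1}ᶜ) := by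
    refine tendsto_nhdsWithin_iff.mpr ⟨?_, ?_⟩
    · exact (Complex.continuous_ofReal.tendsto' 1 1 Complex.ofReal_one).mono_left
        nhdsWithin_le_nhds
    · filter_upwards [self_mem_nhdsWithin] with x hx
      simpa using (mem_Ioi.1 hx).ne'
  have hfreq : ∃ᶠ z in nhdsWithin (1 : ℂ) {1}ᶜ, f z = g z := by
    refine htendsto.frequently (Eventually.frequently ?_)
    filter_upwards [self_mem_nhdsWithin] with x hx
    exact h x (one_pos.trans hx)
  exact (hf.analyticOnNhd hopen).eqOn_of_preconnected_of_frequently_eq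
    (hg.analyticOnNhd hopen) (convex_halfSpace_re_gt 0).isPreconnected (by simp) hfreq

lemma differentiableOn_integral_cexp_neg_mul_sq_powMeasure {a : ℝ} (ha : -1 < a) :
    DifferentiableOn ℂ (fun p : ℂ => ∫ x, Complex.exp (-p * (x : ℂ) ^ 2) ∂powMeasure a)
      {z | 0 < z.re} := by
  have hset : Ioi (0 : ℝ) ⊆ interior
      (ProbabilityTheory.integrableExpSet (fun x : ℝ => -x ^ 2) (powMeasure a)) := by
    refine interior_maximal (fun t ht => ?_) isOpen_Ioi
    have h := integrable_exp_neg_mul_sq_powMeasure ha ht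
    simpa only [ProbabilityTheory.integrableExpSet, mem_ofPred_eq, mul_neg, neg_mul] using h
  have hmgf : DifferentiableOn ℂ
      (ProbabilityTheory.complexMGF (fun x : ℝ => -x ^ 2) (powMeasure a)) {z | 0 < z.re} :=
    ProbabilityTheory.differentiableOn_complexMGF.mono fun z hz => hset hz
  refine hmgf.congr fun p _ => ?_
  simp only [ProbabilityTheory.complexMGF, Complex.ofReal_neg, Complex.ofReal_pow, mul_neg,
    neg_mul]

lemma integral_cexp_neg_mul_sq_powMeasure {a : ℝ} (ha : -1 < a) {p : ℂ} (hp : 0 < p.re) :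
    ∫ x, Complex.exp (-p * (x : ℂ) ^ 2) ∂powMeasure a =
      1 / 2 * p ^ (-((a + 1) / 2 : ℝ) : ℂ) * Real.Gamma ((a + 1) / 2) := by
  refine eqOn_re_pos_of_eq_ofReal (differentiableOn_integral_cexp_neg_mul_sq_powMeasure ha)
    (g := fun p => 1 / 2 * p ^ (-((a + 1) / 2 : ℝ) : ℂ) * Real.Gamma ((a + 1) / 2))
    (fun z hz => ?_) (fun t ht => ?_) hp
  · exact (((differentiableAt_id.cpow_const (Or.inl hz)).const_mul _).mul_const
      _).differentiableWithinAt
  · have h := congrArg Complex.ofReal (integral_exp_neg_mul_sq_powMeasure ha ht)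
    rw [← integral_complex_ofReal, Complex.ofReal_mul, Complex.ofReal_mul,
      Complex.ofReal_cpow ht.le, Complex.ofReal_neg] at h
    push_cast at h ⊢
    exact h

lemma integral_pow_mul_exp_neg_mul_sq {a : ℝ} (ha : -1 < a) (n : ℕ) {p : ℝ} (hp : 0 < p) :
    ∫ x, x ^ (2 * n) * Real.exp (-p * x ^ 2) ∂powMeasure a =
      1 / 2 * p ^ (-((a + 1) / 2)) * (Real.Gamma ((a + 1) / 2 + n) * (1 / p) ^ n) := by
  have h := integral_pow_smul_powMeasure a (2 * n) fun x : ℝ => Real.exp (-p * x ^ 2)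
  simp only [smul_eq_mul, Nat.cast_mul, Nat.cast_ofNat] at h
  rw [h, integral_exp_neg_mul_sq_powMeasure (by linarith [n.cast_nonneg (α := ℝ)]) hp,
    show (a + 2 * n + 1) / 2 = (a + 1) / 2 + n by ring, neg_add, Real.rpow_add hp,
    Real.rpow_neg hp.le (n : ℝ), Real.rpow_natCast, one_div_pow]
  ring

lemma integrable_pow_mul_cexp_neg_mul_sq {a : ℝ} (ha : -1 < a) (n : ℕ) {p : ℂ} (hp : 0 < p.re) :
    Integrable (fun x : ℝ => (x : ℂ) ^ n * Complex.exp (-p * (x : ℂ) ^ 2)) (powMeasure a) := by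
  have h := (integrable_pow_smul_powMeasure_iff a n).mpr
    (integrable_cexp_neg_mul_sq_powMeasure (by linarith [n.cast_nonneg (α := ℝ)]) hp)
  simpa only [Complex.real_smul, Complex.ofReal_pow] using h

lemma integral_pow_mul_cexp_neg_mul_sq {a : ℝ} (ha : -1 < a) (n : ℕ) {p : ℂ} (hp : 0 < p.re) :
    ∫ x, (x : ℂ) ^ (2 * n) * Complex.exp (-p * (x : ℂ) ^ 2) ∂powMeasure a =
      1 / 2 * p ^ (-((a + 1) / 2 : ℝ) : ℂ) * (Real.Gamma ((a + 1) / 2 + n) * (1 / p) ^ n) := by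
  have h := integral_pow_smul_powMeasure a (2 * n) fun x : ℝ => Complex.exp (-p * (x : ℂ) ^ 2)
  simp only [Complex.real_smul, Complex.ofReal_pow, Nat.cast_mul, Nat.cast_ofNat] at h
  have hp0 : p ≠ 0 := by rintro rfl; exact hp.ne rfl
  rw [h, integral_cexp_neg_mul_sq_powMeasure (by linarith [n.cast_nonneg (α := ℝ)]) hp,
    show (a + 2 * n + 1) / 2 = (a + 1) / 2 + n by ring, Complex.ofReal_add, neg_add,
    Complex.cpow_add _ _ hp0, Complex.ofReal_natCast, Complex.cpow_neg p (n : ℂ),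
    Complex.cpow_natCast, one_div_pow]
  ring

lemma continuous_besselE {b : ℝ} (hb : 0 < b) : Continuous (besselE b) := by
  refine continuous_iff_continuousAt.2 fun w => ?_
  have h : ContinuousOn (besselE b) (Metric.ball 0 (‖w‖ + 1)) := by
    refine continuousOn_tsum (u := fun k => besselCoeff b k * (‖w‖ + 1) ^ k)
      (fun k => by fun_prop) (summable_besselCoeff_mul_pow hb (by positivity)) fun k z hz => ?_
    rw [norm_besselCoeff_mul_pow hb]
    have hz' : ‖z‖ ≤ ‖w‖ + 1 := by simpa using (Metric.mem_ball.mp hz).le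
    have := (besselCoeff_pos hb k).le
    gcongr
  exact h.continuousAt (Metric.isOpen_ball.mem_nhds (by simp))

/-- The kernel `(2 / z) ^ ν J_ν(z)` of the modified Hankel transform, for `ν = b - 1`. -/
noncomputable def besselKernel (b z : ℝ) : ℝ :=
  ∑' k : ℕ, besselCoeff b k * (-(z ^ 2 / 4)) ^ k

lemma ofReal_besselKernel (b z : ℝ) :
    (besselKernel b z : ℂ) = besselE b (-((z : ℂ) ^ 2 / 4)) := by
  simp only [besselKernel, besselE]
  push_cast
  rfl

lemma continuous_besselKernel {b : ℝ} (hb : 0 < b) : Continuous (besselKernel b) := by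
  have h : Continuous fun z : ℝ => (besselE b (-((z : ℂ) ^ 2 / 4))).re :=
    Complex.continuous_re.comp ((continuous_besselE hb).comp (by fun_prop))
  simpa only [← ofReal_besselKernel, Complex.ofReal_re] using h

lemma norm_besselKernel_le {b : ℝ} (hb : 1 / 2 ≤ b) (z : ℝ) :
    ‖(besselKernel b z : ℂ)‖ ≤ (Real.Gamma b)⁻¹ := by
  have h := norm_besselE_sq_div_four_le hb (Complex.I * z)
  rw [mul_pow, Complex.I_sq] at h
  rw [ofReal_besselKernel]
  simpa [neg_div] using h

/-- The closed form of Weber's second exponential integral: the kernel of the operator obtained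
by conjugating multiplication by `exp (-p ξ ^ 2)` with the Bessel transform. -/
noncomputable def weberKernel (b : ℝ) (p : ℂ) (x y : ℝ) : ℂ :=
  1 / 2 * p ^ (-b : ℂ) *
    (Complex.exp (-((x ^ 2 + y ^ 2) / (4 * p))) * besselE b ((x * y / (2 * p)) ^ 2 / 4))

/-- The terms of the power series of the integrand in Weber's second exponential integral. -/
noncomputable def weberTerm (b : ℝ) (p : ℂ) (x y : ℝ) (k : ℕ × ℕ) (ξ : ℝ) : ℂ :=
  ((besselCoeff b k.1 * besselCoeff b k.2 : ℝ) *
    ((-(x ^ 2 / 4) : ℂ) ^ k.1 * (-(y ^ 2 / 4) : ℂ) ^ k.2)) *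
      ((ξ : ℂ) ^ (2 * (k.1 + k.2)) * Complex.exp (-p * (ξ : ℂ) ^ 2))

lemma integrable_weberTerm {a : ℝ} (ha : -1 < a) (b : ℝ) {p : ℂ} (hp : 0 < p.re) (x y : ℝ)
    (k : ℕ × ℕ) : Integrable (weberTerm b p x y k) (powMeasure a) :=
  (integrable_pow_mul_cexp_neg_mul_sq ha _ hp).const_mul _

lemma norm_weberTerm {b : ℝ} (hb : 0 < b) (p : ℂ) (x y : ℝ) (k : ℕ × ℕ) (ξ : ℝ) :
    ‖weberTerm b p x y k ξ‖ =
      (besselCoeff b k.1 * besselCoeff b k.2 * ((x ^ 2 / 4) ^ k.1 * (y ^ 2 / 4) ^ k.2)) *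
        (ξ ^ (2 * (k.1 + k.2)) * Real.exp (-p.re * ξ ^ 2)) := by
  have h₁ := (besselCoeff_pos hb k.1).le
  have h₂ := (besselCoeff_pos hb k.2).le
  rw [weberTerm, norm_mul, norm_mul, norm_mul, norm_mul, norm_cexp_neg_mul_sq, norm_pow, norm_pow,
    norm_pow, norm_neg, norm_neg, pow_mul ‖(ξ : ℂ)‖, pow_mul ξ]
  simp [abs_of_nonneg h₁, abs_of_nonneg h₂]

lemma summable_integral_norm_weberTerm {a : ℝ} (ha : -1 < a) {p : ℂ} (hp : 0 < p.re)
    (x y : ℝ) :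
    Summable fun k => ∫ ξ, ‖weberTerm ((a + 1) / 2) p x y k ξ‖ ∂powMeasure a := by
  have hb : 0 < (a + 1) / 2 := by linarith
  have h := ((hasSum_Gamma_mul_besselCoeff_mul_pow hb ((x ^ 2 / 4 * (1 / p.re) : ℝ) : ℂ)
    ((y ^ 2 / 4 * (1 / p.re) : ℝ) : ℂ)).summable.norm).mul_left
      (1 / 2 * p.re ^ (-((a + 1) / 2)))
  have hnonneg : ∀ z : ℝ, 0 ≤ z ^ 2 / 4 * (1 / p.re) := fun z => by positivity
  refine h.congr fun k => ?_
  simp_rw [norm_weberTerm hb]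
  rw [integral_const_mul, integral_pow_mul_exp_neg_mul_sq ha _ hp, norm_mul, norm_mul, norm_pow,
    norm_pow, Complex.norm_of_nonneg (hnonneg x), Complex.norm_of_nonneg (hnonneg y),
    Complex.norm_of_nonneg]
  · push_cast
    rw [← add_assoc, pow_add, mul_pow, mul_pow]
    ring
  · have := besselCoeff_pos hb k.1
    have := besselCoeff_pos hb k.2
    have := Real.Gamma_pos_of_pos
      (add_pos_of_pos_of_nonneg (add_pos_of_pos_of_nonneg hb k.1.cast_nonneg) k.2.cast_nonneg)
    positivity

lemma tsum_weberTerm {b : ℝ} (hb : 0 < b) (p : ℂ) (x y ξ : ℝ) :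
    ∑' k, weberTerm b p x y k ξ =
      Complex.exp (-p * (ξ : ℂ) ^ 2) * (besselKernel b (ξ * y) : ℂ) *
        (besselKernel b (ξ * x) : ℂ) := by
  have hpow : ∀ (z : ℝ) (k : ℕ),
      (-(((ξ * z : ℝ) : ℂ) ^ 2 / 4)) ^ k = (-((z : ℂ) ^ 2 / 4)) ^ k * (ξ : ℂ) ^ (2 * k) := by
    intro z k
    rw [pow_mul, ← mul_pow]
    push_cast
    ring
  rw [ofReal_besselKernel, ofReal_besselKernel, besselE, besselE, mul_assoc, mul_comm (tsum _),
    tsum_mul_tsum_of_summable_norm (summable_norm_besselCoeff_mul_pow hb _)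
      (summable_norm_besselCoeff_mul_pow hb _), ← tsum_mul_left]
  refine tsum_congr fun k => ?_
  rw [hpow, hpow, weberTerm, mul_add, pow_add]
  push_cast
  ring

lemma integral_weberTerm {a : ℝ} (ha : -1 < a) {p : ℂ} (hp : 0 < p.re) (x y : ℝ) (k : ℕ × ℕ) :
    ∫ ξ, weberTerm ((a + 1) / 2) p x y k ξ ∂powMeasure a =
      1 / 2 * p ^ (-((a + 1) / 2 : ℝ) : ℂ) *
        ((Real.Gamma ((a + 1) / 2 + k.1 + k.2) * besselCoeff ((a + 1) / 2) k.1 *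
            besselCoeff ((a + 1) / 2) k.2 : ℝ) *
          ((-(x ^ 2 / (4 * p))) ^ k.1 * (-(y ^ 2 / (4 * p))) ^ k.2)) := by
  have harg : ∀ z : ℝ, -((z : ℂ) ^ 2 / (4 * p)) = -(z ^ 2 / 4) * (1 / p) := fun z => by
    rw [neg_mul, div_mul_div_comm, mul_one]
  simp only [weberTerm]
  rw [integral_const_mul, integral_pow_mul_cexp_neg_mul_sq ha _ hp, harg, harg, mul_pow, mul_pow,
    pow_add, Nat.cast_add, ← add_assoc]
  push_cast
  ring

/-- Weber's second exponential integral. -/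
lemma integral_besselKernel_mul_besselKernel {a : ℝ} (ha : -1 < a) {p : ℂ} (hp : 0 < p.re)
    (x y : ℝ) :
    ∫ ξ, Complex.exp (-p * (ξ : ℂ) ^ 2) * (besselKernel ((a + 1) / 2) (ξ * y) : ℂ) *
        (besselKernel ((a + 1) / 2) (ξ * x) : ℂ) ∂powMeasure a =
      weberKernel ((a + 1) / 2) p x y := by
  have hb : 0 < (a + 1) / 2 := by linarith
  have hintegral := hasSum_integral_of_summable_integral_norm
    (integrable_weberTerm ha ((a + 1) / 2) hp x y) (summable_integral_norm_weberTerm ha hp x y)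
  have hclosed := (hasSum_Gamma_mul_besselCoeff_mul_pow hb (-(x ^ 2 / (4 * p)))
    (-(y ^ 2 / (4 * p)))).mul_left (1 / 2 * p ^ (-((a + 1) / 2 : ℝ) : ℂ))
  simp_rw [tsum_weberTerm hb, integral_weberTerm ha hp] at hintegral
  rw [hintegral.unique hclosed, weberKernel]
  congr 3 <;> ring

lemma norm_weberKernel_le {b : ℝ} (hb : 1 / 2 ≤ b) {p : ℂ} (hp : 0 < p.re) (x y : ℝ) :
    ‖weberKernel b p x y‖ ≤ 1 / 2 * (Real.Gamma b)⁻¹ * ‖p‖ ^ (-b) := by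
  have : 0 < Real.Gamma b := Real.Gamma_pos_of_pos (by linarith)
  have hr : 0 ≤ (1 / p).re := by
    rw [one_div, Complex.inv_re]
    exact div_nonneg hp.le (Complex.normSq_nonneg p)
  have hgauss : -((x ^ 2 + y ^ 2) / (4 * p)) = ((-((x ^ 2 + y ^ 2) / 4) : ℝ) : ℂ) * (1 / p) := by
    push_cast
    rw [neg_mul, div_mul_div_comm, mul_one]
  have harg : (x * y / (2 * p) : ℂ) = ((x * y / 2 : ℝ) : ℂ) * (1 / p) := by
    push_cast
    rw [div_mul_div_comm, mul_one]
  have hE : ‖besselE b ((x * y / (2 * p)) ^ 2 / 4)‖ ≤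
      (Real.Gamma b)⁻¹ * Real.exp (|x * y / 2| * (1 / p).re) := by
    have h := norm_besselE_sq_div_four_le hb (x * y / (2 * p))
    rwa [harg, Complex.re_ofReal_mul, abs_mul, abs_of_nonneg hr, ← harg] at h
  have hexponent : |x * y / 2| ≤ (x ^ 2 + y ^ 2) / 4 := by
    rw [abs_le]
    constructor <;> nlinarith [sq_nonneg (x - y), sq_nonneg (x + y)]
  rw [weberKernel, norm_mul, norm_mul, norm_mul, ← Complex.ofReal_neg, Complex.norm_cpow_real,
    Complex.norm_exp, hgauss, Complex.re_ofReal_mul]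
  calc _ ≤ ‖(1 / 2 : ℂ)‖ * ‖p‖ ^ (-b) * (Real.exp (-((x ^ 2 + y ^ 2) / 4) * (1 / p).re) *
        ((Real.Gamma b)⁻¹ * Real.exp (|x * y / 2| * (1 / p).re))) := by gcongr
    _ = 1 / 2 * (Real.Gamma b)⁻¹ * ‖p‖ ^ (-b) *
        Real.exp ((|x * y / 2| - (x ^ 2 + y ^ 2) / 4) * (1 / p).re) := by
      rw [sub_mul, sub_eq_neg_add, ← neg_mul, Real.exp_add]
      norm_num
      ring
    _ ≤ 1 / 2 * (Real.Gamma b)⁻¹ * ‖p‖ ^ (-b) * 1 := by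
      gcongr
      exact Real.exp_le_one_iff.2 (mul_nonpos_of_nonpos_of_nonneg (sub_nonpos.2 hexponent) hr)
    _ = _ := mul_one _

/-- The modified Hankel transform of order `(a - 1) / 2`, up to the constant in
`hankel_eq_besselTransform`. -/
noncomputable def besselTransform (a : ℝ) (f : ℝ → ℂ) (ξ : ℝ) : ℂ :=
  ∫ x, f x * (besselKernel ((a + 1) / 2) (ξ * x) : ℂ) ∂powMeasure a

/-- The spectral multiplier `exp (-p ξ ^ 2)` of the Bessel transform: the heat semigroup for real
`p` and the Schrödinger group for imaginary `p`, up to a constant. -/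
noncomputable def besselSemigroup (a : ℝ) (p : ℂ) (f : ℝ → ℂ) : ℝ → ℂ :=
  besselTransform a fun ξ => Complex.exp (-p * (ξ : ℂ) ^ 2) * besselTransform a f ξ

section Transform

variable {a : ℝ} {f g : ℝ → ℂ}

lemma continuous_besselKernel_mul (ha : 0 ≤ a) :
    Continuous fun z : ℝ × ℝ => (besselKernel ((a + 1) / 2) (z.1 * z.2) : ℂ) :=
  Complex.continuous_ofReal.comp ((continuous_besselKernel (by linarith)).comp (by fun_prop))

lemma norm_mul_besselKernel_le (ha : 0 ≤ a) (w : ℂ) (z : ℝ) :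
    ‖w * (besselKernel ((a + 1) / 2) z : ℂ)‖ ≤ ‖w‖ * (Real.Gamma ((a + 1) / 2))⁻¹ := by
  rw [norm_mul]
  gcongr
  exact norm_besselKernel_le (by linarith) z

lemma integrable_mul_besselKernel (ha : 0 ≤ a) (hf : Integrable f (powMeasure a)) (ξ : ℝ) :
    Integrable (fun x => f x * (besselKernel ((a + 1) / 2) (ξ * x) : ℂ)) (powMeasure a) :=
  hf.mul_bdd ((continuous_besselKernel_mul ha).comp (by fun_prop :
      Continuous fun x => (ξ, x))).aestronglyMeasurable
    (ae_of_all _ fun _ => norm_besselKernel_le (by linarith) _)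

lemma norm_besselTransform_le (ha : 0 ≤ a) (hf : Integrable f (powMeasure a)) (ξ : ℝ) :
    ‖besselTransform a f ξ‖ ≤ (∫ x, ‖f x‖ ∂powMeasure a) * (Real.Gamma ((a + 1) / 2))⁻¹ := by
  rw [← integral_mul_const]
  exact norm_integral_le_of_norm_le (hf.norm.mul_const _)
    (ae_of_all _ fun x => norm_mul_besselKernel_le ha _ _)

lemma continuous_besselTransform (ha : 0 ≤ a) (hf : Integrable f (powMeasure a)) :
    Continuous (besselTransform a f) :=
  continuous_of_dominated (bound := fun x => ‖f x‖ * (Real.Gamma ((a + 1) / 2))⁻¹)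
    (fun ξ => (integrable_mul_besselKernel ha hf ξ).aestronglyMeasurable)
    (fun ξ => ae_of_all _ fun x => norm_mul_besselKernel_le ha _ _) (hf.norm.mul_const _)
    (ae_of_all _ fun x => continuous_const.mul ((continuous_besselKernel_mul ha).comp
      (by fun_prop : Continuous fun ξ => (ξ, x))))

lemma besselTransform_add (ha : 0 ≤ a) (hf : Integrable f (powMeasure a))
    (hg : Integrable g (powMeasure a)) :
    besselTransform a (f + g) = besselTransform a f + besselTransform a g := by
  funext ξ
  simp only [besselTransform, Pi.add_apply, add_mul]
  exact integral_add (integrable_mul_besselKernel ha hf ξ) (integrable_mul_besselKernel ha hg ξ)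

lemma conj_besselTransform (a : ℝ) (f : ℝ → ℂ) (ξ : ℝ) :
    (starRingEnd ℂ) (besselTransform a f ξ) =
      besselTransform a (fun x => (starRingEnd ℂ) (f x)) ξ := by
  simp only [besselTransform, ← integral_conj, map_mul, Complex.conj_ofReal]

lemma integral_mul_besselTransform (ha : 0 ≤ a) (hf : Integrable f (powMeasure a))
    (hg : Integrable g (powMeasure a)) :
    ∫ ξ, g ξ * besselTransform a f ξ ∂powMeasure a =
      ∫ x, besselTransform a g x * f x ∂powMeasure a := by
  have hfg : Integrable (fun z : ℝ × ℝ => (g z.1 * f z.2) *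
      (besselKernel ((a + 1) / 2) (z.1 * z.2) : ℂ)) ((powMeasure a).prod (powMeasure a)) :=
    (hg.mul_prod hf).mul_bdd (continuous_besselKernel_mul ha).aestronglyMeasurable
      (ae_of_all _ fun _ => norm_besselKernel_le (by linarith) _)
  simp only [besselTransform, ← integral_const_mul, ← integral_mul_const]
  rw [integral_integral_swap (by simpa only [Function.uncurry_def, mul_assoc] using hfg)]
  refine integral_congr_ae (ae_of_all _ fun x => integral_congr_ae (ae_of_all _ fun y => ?_))
  simp only [mul_comm y x]
  ring

lemma integrable_cexp_mul_besselTransform (ha : 0 ≤ a) {p : ℂ} (hp : 0 < p.re)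
    (hf : Integrable f (powMeasure a)) :
    Integrable (fun ξ : ℝ => Complex.exp (-p * (ξ : ℂ) ^ 2) * besselTransform a f ξ)
      (powMeasure a) :=
  (integrable_cexp_neg_mul_sq_powMeasure (by linarith) hp).mul_bdd
    (continuous_besselTransform ha hf).aestronglyMeasurable
    (ae_of_all _ fun ξ => norm_besselTransform_le ha hf ξ)

lemma continuous_besselSemigroup (ha : 0 ≤ a) {p : ℂ} (hp : 0 < p.re)
    (hf : Integrable f (powMeasure a)) : Continuous (besselSemigroup a p f) :=
  continuous_besselTransform ha (integrable_cexp_mul_besselTransform ha hp hf)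

lemma besselSemigroup_add (ha : 0 ≤ a) {p : ℂ} (hp : 0 < p.re)
    (hf : Integrable f (powMeasure a)) (hg : Integrable g (powMeasure a)) :
    besselSemigroup a p (f + g) = besselSemigroup a p f + besselSemigroup a p g := by
  simp only [besselSemigroup]
  rw [← besselTransform_add ha (integrable_cexp_mul_besselTransform ha hp hf)
    (integrable_cexp_mul_besselTransform ha hp hg), besselTransform_add ha hf hg]
  simp only [Pi.add_def, mul_add]

lemma besselSemigroup_eq_integral_weberKernel (ha : 0 ≤ a) {p : ℂ} (hp : 0 < p.re)
    (hf : Integrable f (powMeasure a)) (y : ℝ) :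
    besselSemigroup a p f y = ∫ x, weberKernel ((a + 1) / 2) p x y * f x ∂powMeasure a := by
  have hkernel : ∀ x, besselTransform a (fun ξ : ℝ => Complex.exp (-p * (ξ : ℂ) ^ 2) *
      (besselKernel ((a + 1) / 2) (y * ξ) : ℂ)) x = weberKernel ((a + 1) / 2) p x y := by
    intro x
    rw [← integral_besselKernel_mul_besselKernel (by linarith) hp x y]
    simp only [besselTransform, mul_comm y, mul_comm x]
  have h := integral_mul_besselTransform ha hf (integrable_mul_besselKernel ha
    (integrable_cexp_neg_mul_sq_powMeasure (by linarith) hp) y)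
  simp only [hkernel] at h
  rw [← h, besselSemigroup, besselTransform]
  exact integral_congr_ae (ae_of_all _ fun ξ => mul_right_comm _ _ _)

lemma enorm_besselSemigroup_le (ha : 0 ≤ a) {p : ℂ} (hp : 0 < p.re)
    (hf : Integrable f (powMeasure a)) (y : ℝ) :
    ‖besselSemigroup a p f y‖ₑ ≤
      ENNReal.ofReal (1 / 2 * (Real.Gamma ((a + 1) / 2))⁻¹ * ‖p‖ ^ (-((a + 1) / 2))) *
        ∫⁻ x, ‖f x‖ₑ ∂powMeasure a := by
  rw [besselSemigroup_eq_integral_weberKernel ha hp hf,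
    ← lintegral_const_mul' _ _ ENNReal.ofReal_ne_top]
  refine (enorm_integral_le_lintegral_enorm _).trans (lintegral_mono fun x => ?_)
  rw [enorm_mul, ← ofReal_norm]
  gcongr
  exact norm_weberKernel_le (by linarith) hp x y

lemma integral_cexp_mul_besselTransform_mul_conj (ha : 0 ≤ a) {p : ℂ} (hp : 0 < p.re)
    (hf : Integrable f (powMeasure a)) (hg : Integrable g (powMeasure a)) :
    ∫ ξ, Complex.exp (-p * (ξ : ℂ) ^ 2) * besselTransform a f ξ *
        (starRingEnd ℂ) (besselTransform a g ξ) ∂powMeasure a =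
      ∫ y, besselSemigroup a p f y * (starRingEnd ℂ) (g y) ∂powMeasure a := by
  simp only [conj_besselTransform]
  exact integral_mul_besselTransform ha
    ((LinearIsometryEquiv.integrable_comp_iff Complex.conjLIE).mpr hg)
    (integrable_cexp_mul_besselTransform ha hp hf)

end Transform

lemma weberKernel_comm (b : ℝ) (p : ℂ) (x y : ℝ) : weberKernel b p x y = weberKernel b p y x := by
  rw [weberKernel, weberKernel, add_comm, mul_comm (x : ℂ) y]

lemma continuous_weberKernel {b : ℝ} (hb : 0 < b) (p : ℂ) :
    Continuous fun z : ℝ × ℝ => weberKernel b p z.1 z.2 := by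
  simp only [weberKernel]
  exact continuous_const.mul (Continuous.mul (by fun_prop)
    ((continuous_besselE hb).comp (by fun_prop)))

lemma enorm_eq_tsum_ofReal_of_hasSum {ι : Type*} {u : ι → ℝ} {z : ℂ} (hu : ∀ i, 0 ≤ u i)
    (h : HasSum (fun i => (u i : ℂ)) z) : ‖z‖ₑ = ∑' i, ENNReal.ofReal (u i) := by
  rw [← h.tsum_eq, ← Complex.ofReal_tsum, ← ofReal_norm, Complex.norm_of_nonneg (tsum_nonneg hu),
    ENNReal.ofReal_tsum_of_nonneg hu (Complex.summable_ofReal.1 h.summable)]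

lemma hasSum_weberKernel_ofReal {b : ℝ} (hb : 0 < b) {ε : ℝ} (hε : 0 < ε) (x y : ℝ) :
    HasSum (fun k : ℕ => ((1 / 2 * ε ^ (-b) * Real.exp (-(x ^ 2 / (4 * ε))) *
      (besselCoeff b k * (x ^ 2 / (16 * ε ^ 2)) ^ k) *
        (y ^ (2 * k) * Real.exp (-(1 / (4 * ε)) * y ^ 2)) : ℝ) : ℂ))
      (weberKernel b ε x y) := by
  have hε' : (ε : ℂ) ≠ 0 := by exact_mod_cast hε.ne'
  have hgauss : -(((x : ℂ) ^ 2 + y ^ 2) / (4 * ε)) =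
      -(x ^ 2 / (4 * ε)) + -(1 / (4 * ε)) * y ^ 2 := by
    field_simp
    ring
  have harg : ((x : ℂ) * y / (2 * ε)) ^ 2 / 4 = x ^ 2 / (16 * ε ^ 2) * y ^ 2 := by
    field_simp
    norm_num
    ring
  rw [weberKernel, hgauss, harg, Complex.exp_add, ← mul_assoc]
  refine ((hasSum_besselE hb _).mul_left _).congr_fun fun k => ?_
  push_cast
  rw [Complex.ofReal_cpow hε.le, mul_pow, pow_mul]
  push_cast
  ring

lemma lintegral_pow_mul_exp_neg_mul_sq {a : ℝ} (ha : -1 < a) (n : ℕ) {p : ℝ} (hp : 0 < p) :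
    ∫⁻ x, ENNReal.ofReal (x ^ (2 * n) * Real.exp (-p * x ^ 2)) ∂powMeasure a = ENNReal.ofReal
      (1 / 2 * p ^ (-((a + 1) / 2)) * (Real.Gamma ((a + 1) / 2 + n) * (1 / p) ^ n)) := by
  have hint : Integrable (fun x : ℝ => x ^ (2 * n) * Real.exp (-p * x ^ 2)) (powMeasure a) :=
    (integrable_pow_smul_powMeasure_iff a (2 * n)).mpr (integrable_exp_neg_mul_sq_powMeasure
      (by linarith [(2 * n).cast_nonneg (α := ℝ)]) hp)
  rw [← integral_pow_mul_exp_neg_mul_sq ha n hp, ofReal_integral_eq_lintegral_ofReal hint]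
  exact ae_of_all _ fun x => mul_nonneg ((even_two_mul n).pow_nonneg x) (Real.exp_pos _).le

lemma lintegral_weberKernel_ofReal_term {a : ℝ} (ha : -1 < a) {ε : ℝ} (hε : 0 < ε) (x : ℝ)
    (k : ℕ) :
    ∫⁻ y, ENNReal.ofReal (1 / 2 * ε ^ (-((a + 1) / 2)) * Real.exp (-(x ^ 2 / (4 * ε))) *
      (besselCoeff ((a + 1) / 2) k * (x ^ 2 / (16 * ε ^ 2)) ^ k) *
        (y ^ (2 * k) * Real.exp (-(1 / (4 * ε)) * y ^ 2))) ∂powMeasure a =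
      ENNReal.ofReal (4 ^ ((a + 1) / 2) / 4 * Real.exp (-(x ^ 2 / (4 * ε))) *
        ((x ^ 2 / (4 * ε)) ^ k / k.factorial)) := by
  have hb : 0 < (a + 1) / 2 := by linarith
  generalize hB : (a + 1) / 2 = b at hb ⊢
  have hcoeff := (besselCoeff_pos hb k).le
  have hpow : (1 / (4 * ε)) ^ (-b) = 4 ^ b * ε ^ b := by
    rw [one_div, Real.inv_rpow (by positivity), ← Real.rpow_neg (by positivity), neg_neg,
      Real.mul_rpow (by norm_num) hε.le]
  have hcancel : ε ^ (-b) * ε ^ b = 1 := by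
    rw [← Real.rpow_add hε, neg_add_cancel, Real.rpow_zero]
  have hGamma : besselCoeff b k * Real.Gamma (b + k) = 1 / k.factorial := by
    have := (Gamma_add_nat_pos hb k).ne'
    rw [besselCoeff]
    field_simp
  have hbase : (x ^ 2 / (16 * ε ^ 2)) ^ k * (4 * ε) ^ k = (x ^ 2 / (4 * ε)) ^ k := by
    rw [← mul_pow]
    congr 1
    field_simp
    norm_num
  rw [lintegral_congr fun y => ENNReal.ofReal_mul (by positivity),
    lintegral_const_mul _ (by fun_prop), lintegral_pow_mul_exp_neg_mul_sq ha k (by positivity),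
    ← ENNReal.ofReal_mul (by positivity), hB, hpow, one_div_one_div]
  congr 1
  calc _ = 4 ^ b / 4 * Real.exp (-(x ^ 2 / (4 * ε))) * (ε ^ (-b) * ε ^ b) *
        ((besselCoeff b k * Real.Gamma (b + k)) *
          ((x ^ 2 / (16 * ε ^ 2)) ^ k * (4 * ε) ^ k)) := by ring
    _ = _ := by
      rw [hcancel, hGamma, hbase]
      ring

lemma lintegral_enorm_weberKernel_ofReal {a : ℝ} (ha : -1 < a) {ε : ℝ} (hε : 0 < ε) (x : ℝ) :
    ∫⁻ y, ‖weberKernel ((a + 1) / 2) ε x y‖ₑ ∂powMeasure a =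
      ENNReal.ofReal (4 ^ ((a + 1) / 2) / 4) := by
  have hb : 0 < (a + 1) / 2 := by linarith
  have hnonneg : ∀ (y : ℝ) (k : ℕ), 0 ≤ 1 / 2 * ε ^ (-((a + 1) / 2)) *
      Real.exp (-(x ^ 2 / (4 * ε))) *
      (besselCoeff ((a + 1) / 2) k * (x ^ 2 / (16 * ε ^ 2)) ^ k) *
        (y ^ (2 * k) * Real.exp (-(1 / (4 * ε)) * y ^ 2)) := fun y k => by
    have := (besselCoeff_pos hb k).le
    have := (even_two_mul k).pow_nonneg y
    positivity
  rw [lintegral_congr fun y =>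
      enorm_eq_tsum_ofReal_of_hasSum (hnonneg y) (hasSum_weberKernel_ofReal hb hε x y),
    lintegral_tsum fun k => by fun_prop]
  simp_rw [lintegral_weberKernel_ofReal_term ha hε x]
  rw [← ENNReal.ofReal_tsum_of_nonneg (fun k => by positivity)
    ((Real.summable_pow_div_factorial _).mul_left _), tsum_mul_left,
    ← congrFun NormedSpace.exp_eq_tsum_div, ← Real.exp_eq_exp_ℝ, mul_assoc, ← Real.exp_add,
    neg_add_cancel, Real.exp_zero, mul_one]

section Energy

lemma lintegral_le_of_forall_lintegral_exp_neg_mul_sq_mul_le {μ : Measure ℝ} {h : ℝ → ENNReal}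
    (hh : AEMeasurable h μ) {B : ENNReal}
    (hB : ∀ ε : ℝ, 0 < ε → ∫⁻ x, ENNReal.ofReal (Real.exp (-ε * x ^ 2)) * h x ∂μ ≤ B) :
    ∫⁻ x, h x ∂μ ≤ B := by
  set ε : ℕ → ℝ := fun n => 1 / ((n : ℝ) + 1)
  have hlim : ∀ x : ℝ, Tendsto (fun n => ENNReal.ofReal (Real.exp (-ε n * x ^ 2)) * h x) atTop
      (nhds (h x)) := by
    intro x
    have hexp : Tendsto (fun n => Real.exp (-ε n * x ^ 2)) atTop (nhds 1) := by
      have hε := tendsto_one_div_add_atTop_nhds_zero_nat (𝕜 := ℝ)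
      simpa [ε] using (hε.neg.mul_const (x ^ 2)).rexp
    simpa using ENNReal.Tendsto.mul_const (b := h x) (ENNReal.tendsto_ofReal hexp) (by simp)
  calc ∫⁻ x, h x ∂μ
      = ∫⁻ x, liminf (fun n => ENNReal.ofReal (Real.exp (-ε n * x ^ 2)) * h x) atTop ∂μ :=
        lintegral_congr fun x => (hlim x).liminf_eq.symm
    _ ≤ liminf (fun n => ∫⁻ x, ENNReal.ofReal (Real.exp (-ε n * x ^ 2)) * h x ∂μ) atTop :=
        lintegral_liminf_le' fun n => by fun_prop
    _ ≤ B := liminf_le_of_le (by isBoundedDefault) fun c hc =>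
        let ⟨n, hn⟩ := hc.exists
        hn.trans (hB (ε n) Nat.one_div_pos_of_nat)

lemma lintegral_exp_neg_mul_sq_mul_enorm_sq {μ : Measure ℝ} {g : ℝ → ℂ} {ε : ℝ}
    (hint : Integrable (fun ξ : ℝ => Real.exp (-ε * ξ ^ 2) * ‖g ξ‖ ^ 2) μ) :
    ∫⁻ ξ, ENNReal.ofReal (Real.exp (-ε * ξ ^ 2)) * ‖g ξ‖ₑ ^ 2 ∂μ =
      ‖∫ ξ, Complex.exp (-(ε : ℂ) * (ξ : ℂ) ^ 2) * g ξ * (starRingEnd ℂ) (g ξ) ∂μ‖ₑ := by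
  have hofReal : ∀ ξ : ℝ, Complex.exp (-(ε : ℂ) * (ξ : ℂ) ^ 2) * g ξ * (starRingEnd ℂ) (g ξ) =
      ((Real.exp (-ε * ξ ^ 2) * ‖g ξ‖ ^ 2 : ℝ) : ℂ) := by
    intro ξ
    rw [mul_assoc, Complex.mul_conj, Complex.normSq_eq_norm_sq]
    push_cast
    rfl
  simp only [hofReal]
  rw [integral_complex_ofReal, ← ofReal_norm, Complex.norm_of_nonneg
    (integral_nonneg fun ξ => by positivity), ofReal_integral_eq_lintegral_ofReal hint
    (ae_of_all _ fun ξ => by positivity)]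
  refine lintegral_congr fun ξ => ?_
  rw [ENNReal.ofReal_mul (Real.exp_pos _).le, ENNReal.ofReal_pow (norm_nonneg _), ofReal_norm]

lemma lintegral_enorm_sq_le_of_forall_enorm_integral_cexp_le {a : ℝ} (ha : -1 < a) {g : ℝ → ℂ}
    (hg : AEStronglyMeasurable g (powMeasure a)) {D : ℝ} (hD : ∀ ξ, ‖g ξ‖ ≤ D) {B : ENNReal}
    (hB : ∀ ε : ℝ, 0 < ε → ‖∫ ξ, Complex.exp (-(ε : ℂ) * (ξ : ℂ) ^ 2) * g ξ *
      (starRingEnd ℂ) (g ξ) ∂powMeasure a‖ₑ ≤ B) :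
    ∫⁻ ξ, ‖g ξ‖ₑ ^ 2 ∂powMeasure a ≤ B := by
  refine lintegral_le_of_forall_lintegral_exp_neg_mul_sq_mul_le (hg.enorm.pow_const 2)
    fun ε hε => ?_
  rw [lintegral_exp_neg_mul_sq_mul_enorm_sq]
  · exact hB ε hε
  · refine (integrable_exp_neg_mul_sq_powMeasure ha hε).mul_bdd (c := D ^ 2)
      (hg.norm.pow 2) (ae_of_all _ fun ξ => ?_)
    rw [norm_pow, norm_norm]
    gcongr
    exact hD ξ

lemma mul_le_half_sq_add_half_sq (x y : ENNReal) : x * y ≤ 2⁻¹ * x ^ 2 + 2⁻¹ * y ^ 2 := by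
  have h := ENNReal.young_inequality x y Real.HolderConjugate.two_two
  simpa [ENNReal.div_eq_inv_mul] using h

/-- The Schur test for a symmetric kernel. -/
lemma lintegral_lintegral_mul_mul_le_of_symmetric {α : Type*} [MeasurableSpace α] {μ : Measure α}
    [SFinite μ] {K : α → α → ENNReal} (hK : Measurable (Function.uncurry K))
    (hsymm : ∀ x y, K x y = K y x) {C : ENNReal} (hC : ∀ x, ∫⁻ y, K x y ∂μ ≤ C)
    {f : α → ENNReal} (hf : AEMeasurable f μ) :
    ∫⁻ x, ∫⁻ y, K x y * (f x * f y) ∂μ ∂μ ≤ C * ∫⁻ x, f x ^ 2 ∂μ := by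
  have hf2 := hf.pow_const 2
  have hswap : ∫⁻ x, ∫⁻ y, K x y * f y ^ 2 ∂μ ∂μ = ∫⁻ x, ∫⁻ y, K x y * f x ^ 2 ∂μ ∂μ := by
    rw [lintegral_lintegral_swap (hK.aemeasurable.mul hf2.comp_snd)]
    simp only [hsymm]
  have hrow : ∫⁻ x, ∫⁻ y, K x y * f x ^ 2 ∂μ ∂μ ≤ C * ∫⁻ x, f x ^ 2 ∂μ := by
    rw [← lintegral_const_mul'' _ hf2]
    refine lintegral_mono fun x => ?_
    rw [lintegral_mul_const _ hK.of_uncurry_left]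
    exact mul_le_mul_left (hC x) _
  have hmeas : AEMeasurable (fun x => ∫⁻ y, K x y * f x ^ 2 ∂μ) μ :=
    (hK.aemeasurable.mul hf2.comp_fst).lintegral_prod_right'
  calc ∫⁻ x, ∫⁻ y, K x y * (f x * f y) ∂μ ∂μ
      ≤ ∫⁻ x, ∫⁻ y, (2⁻¹ * (K x y * f x ^ 2) + 2⁻¹ * (K x y * f y ^ 2)) ∂μ ∂μ := by
        refine lintegral_mono fun x => lintegral_mono fun y => ?_
        rw [mul_left_comm 2⁻¹, mul_left_comm 2⁻¹, ← mul_add]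
        exact mul_le_mul_right (mul_le_half_sq_add_half_sq _ _) _
    _ = 2⁻¹ * ∫⁻ x, ∫⁻ y, K x y * f x ^ 2 ∂μ ∂μ + 2⁻¹ * ∫⁻ x, ∫⁻ y, K x y * f y ^ 2 ∂μ ∂μ := by
        rw [← lintegral_const_mul'' _ hmeas, ← lintegral_const_mul' _ _ (by finiteness),
          ← lintegral_add_left' (hmeas.const_mul _)]
        refine lintegral_congr fun x => ?_
        rw [lintegral_add_left ((hK.of_uncurry_left.mul_const _).const_mul _),
          lintegral_const_mul' _ _ (by finiteness), lintegral_const_mul' _ _ (by finiteness)]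
    _ = ∫⁻ x, ∫⁻ y, K x y * f x ^ 2 ∂μ ∂μ := by
        rw [hswap, ← add_mul, ENNReal.inv_two_add_inv_two, one_mul]
    _ ≤ C * ∫⁻ x, f x ^ 2 ∂μ := hrow

variable {a : ℝ} {f : ℝ → ℂ}

lemma lintegral_enorm_besselTransform_sq_le (ha : 0 ≤ a) (hf : Integrable f (powMeasure a)) :
    ∫⁻ ξ, ‖besselTransform a f ξ‖ₑ ^ 2 ∂powMeasure a ≤
      ENNReal.ofReal (4 ^ ((a + 1) / 2) / 4) * ∫⁻ x, ‖f x‖ₑ ^ 2 ∂powMeasure a := by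
  refine lintegral_enorm_sq_le_of_forall_enorm_integral_cexp_le (by linarith)
    (continuous_besselTransform ha hf).aestronglyMeasurable
    (norm_besselTransform_le ha hf) fun ε hε => ?_
  have hp : 0 < (ε : ℂ).re := by simpa using hε
  rw [integral_cexp_mul_besselTransform_mul_conj ha hp hf hf]
  calc ‖∫ y, besselSemigroup a ε f y * (starRingEnd ℂ) (f y) ∂powMeasure a‖ₑ
      ≤ ∫⁻ y, ∫⁻ x, ‖weberKernel ((a + 1) / 2) ε y x‖ₑ * (‖f y‖ₑ * ‖f x‖ₑ)
          ∂powMeasure a ∂powMeasure a := by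
        refine (enorm_integral_le_lintegral_enorm _).trans (lintegral_mono fun y => ?_)
        rw [enorm_mul, besselSemigroup_eq_integral_weberKernel ha hp hf, RCLike.enorm_conj,
          mul_comm]
        refine (mul_le_mul_right (enorm_integral_le_lintegral_enorm _) _).trans_eq ?_
        rw [← lintegral_const_mul' _ _ enorm_ne_top]
        simp only [enorm_mul, weberKernel_comm _ _ y, mul_left_comm]
    _ ≤ _ := lintegral_lintegral_mul_mul_le_of_symmetric
        (continuous_weberKernel (by linarith) ε).measurable.enorm
        (fun x y => by rw [weberKernel_comm])
        (fun x => (lintegral_enorm_weberKernel_ofReal (by linarith) hε x).le)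
        hf.aestronglyMeasurable.enorm

lemma lintegral_enorm_besselSemigroup_sq_le (ha : 0 ≤ a) {p : ℂ} (hp : 0 < p.re)
    (hf : Integrable f (powMeasure a)) :
    ∫⁻ ξ, ‖besselSemigroup a p f ξ‖ₑ ^ 2 ∂powMeasure a ≤
      ENNReal.ofReal (4 ^ ((a + 1) / 2) / 4) ^ 2 * ∫⁻ x, ‖f x‖ₑ ^ 2 ∂powMeasure a := by
  have hmultiplier : ∀ ξ : ℝ, ‖Complex.exp (-p * (ξ : ℂ) ^ 2)‖ₑ ≤ 1 := fun ξ => by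
    rw [← ofReal_norm, norm_cexp_neg_mul_sq, ENNReal.ofReal_le_one, Real.exp_le_one_iff]
    nlinarith [sq_nonneg ξ]
  rw [sq, mul_assoc]
  refine (lintegral_enorm_besselTransform_sq_le ha
    (integrable_cexp_mul_besselTransform ha hp hf)).trans ?_
  gcongr
  refine (lintegral_mono fun ξ => ?_).trans (lintegral_enorm_besselTransform_sq_le ha hf)
  rw [enorm_mul]
  gcongr
  exact mul_le_of_le_one_left' (hmultiplier ξ)

end Energy

section Interpolation

variable {α E : Type*} [MeasurableSpace α] {μ : Measure α} [NormedAddCommGroup E]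

lemma lintegral_Ioc_ofReal_rpow {s L : ℝ} (hs : -1 < s) (hL : 0 ≤ L) :
    ∫⁻ x in Ioc 0 L, ENNReal.ofReal (x ^ s) = ENNReal.ofReal (L ^ (s + 1) / (s + 1)) := by
  have hi : IntegrableOn (fun x : ℝ => x ^ s) (Ioc 0 L) :=
    (intervalIntegrable_iff_integrableOn_Ioc_of_le hL).mp
      (intervalIntegral.intervalIntegrable_rpow' hs)
  rw [← ofReal_integral_eq_lintegral_ofReal hi, ← intervalIntegral.integral_of_le hL,
    integral_rpow (Or.inl hs), Real.zero_rpow (by linarith), sub_zero]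
  filter_upwards [ae_restrict_mem measurableSet_Ioc] with x hx
  exact Real.rpow_nonneg hx.1.le s

lemma measurableSet_mul_norm_rpow_le {f : α → E} (hf : StronglyMeasurable f) (κ R l : ℝ) :
    MeasurableSet {x | l * ‖f x‖ ^ κ ≤ R} := by
  have := hf.norm.measurable
  exact measurableSet_le (by fun_prop) (by fun_prop)

lemma ofReal_mul_lintegral_indicator_compl_le {s : ℝ} (hs : 1 < s) {R l : ℝ} (hR : 0 ≤ R)
    (hl : 0 ≤ l) (f : α → E) :
    ENNReal.ofReal R * ∫⁻ x, ‖{x | l * ‖f x‖ ^ (s - 1) ≤ R}ᶜ.indicator f x‖ₑ ∂μ ≤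
      ENNReal.ofReal l * ∫⁻ x, ‖f x‖ₑ ^ s ∂μ := by
  rw [← lintegral_const_mul' _ _ ENNReal.ofReal_ne_top,
    ← lintegral_const_mul' _ _ ENNReal.ofReal_ne_top]
  refine lintegral_mono fun x => ?_
  by_cases hx : l * ‖f x‖ ^ (s - 1) ≤ R
  · rw [indicator_of_notMem (by simpa using hx)]
    simp
  rw [indicator_of_mem (by simpa using hx), ← ofReal_norm,
    ENNReal.ofReal_rpow_of_nonneg (norm_nonneg _) (by linarith), ← ENNReal.ofReal_mul hR,
    ← ENNReal.ofReal_mul hl]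
  refine ENNReal.ofReal_le_ofReal ?_
  calc R * ‖f x‖ ≤ l * ‖f x‖ ^ (s - 1) * ‖f x‖ := by
        gcongr
        exact (not_le.1 hx).le
    _ = l * ‖f x‖ ^ s := by
        rw [mul_assoc, ← Real.rpow_add_one' (norm_nonneg _) (by linarith), sub_add_cancel]

lemma enorm_sq_mul_lintegral_indicator_rpow {r s : ℝ} (hrs : r.HolderConjugate s) (hr : 2 < r)
    {R : ℝ} (hR : 0 ≤ R) (v : E) :
    ∫⁻ l in Ioi (0 : ℝ), {l : ℝ | l * ‖v‖ ^ (s - 1) ≤ R}.indicator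
        (fun l => ‖v‖ₑ ^ 2 * ENNReal.ofReal (l ^ (r - 3))) l =
      ENNReal.ofReal (R ^ (r - 2) / (r - 2)) * ‖v‖ₑ ^ s := by
  rcases (norm_nonneg v).eq_or_lt with hv | hv
  · have hv0 : v = 0 := norm_eq_zero.mp hv.symm
    simp [hv0, ENNReal.zero_rpow_of_pos hrs.symm.pos]
  have hset : {l : ℝ | l * ‖v‖ ^ (s - 1) ≤ R} = Iic (R / ‖v‖ ^ (s - 1)) := by
    ext l
    rw [mem_Iic, le_div_iff₀ (by positivity), mem_ofPred_eq]
  have hexponent : 2 = s + (s - 1) * (r - 2) := by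
    linarith [hrs.symm.sub_one_mul_conj]
  have hpow : ‖v‖ ^ 2 = ‖v‖ ^ s * (‖v‖ ^ (s - 1)) ^ (r - 2) := by
    rw [← Real.rpow_mul hv.le, ← Real.rpow_add hv, ← hexponent, Real.rpow_two]
  have hne : (‖v‖ ^ (s - 1)) ^ (r - 2) ≠ 0 := by positivity
  rw [hset, lintegral_indicator measurableSet_Iic, Measure.restrict_restrict measurableSet_Iic,
    Iic_inter_Ioi, lintegral_const_mul' _ _ (by finiteness),
    lintegral_Ioc_ofReal_rpow (by linarith) (by positivity), ← ofReal_norm,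
    ENNReal.ofReal_rpow_of_pos hv, ← ENNReal.ofReal_pow hv.le, ← ENNReal.ofReal_mul (by positivity),
    ← ENNReal.ofReal_mul (div_nonneg (by positivity) (by linarith)),
    show r - 3 + 1 = r - 2 by ring, Real.div_rpow hR (by positivity), hpow]
  congr 1
  field_simp

lemma measurable_enorm_indicator_mul_norm_rpow_le {f : α → E} (hf : StronglyMeasurable f)
    (κ R : ℝ) :
    Measurable fun z : ℝ × α => ‖{x | z.1 * ‖f x‖ ^ κ ≤ R}.indicator f z.2‖ₑ := by
  have hnorm : Measurable fun z : ℝ × α => ‖f z.2‖ := hf.norm.measurable.comp measurable_snd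
  have hindicator : (fun z : ℝ × α => ‖{x | z.1 * ‖f x‖ ^ κ ≤ R}.indicator f z.2‖ₑ) =
      {z : ℝ × α | z.1 * ‖f z.2‖ ^ κ ≤ R}.indicator fun z => ‖f z.2‖ₑ := by
    ext z
    by_cases hz : z.1 * ‖f z.2‖ ^ κ ≤ R <;> simp [hz]
  rw [hindicator]
  exact (hf.enorm.comp measurable_snd).indicator (measurableSet_le (by fun_prop) (by fun_prop))

lemma lintegral_lintegral_indicator_mul_rpow [SFinite μ] {r s : ℝ} (hrs : r.HolderConjugate s)
    (hr : 2 < r) {R : ℝ} (hR : 0 ≤ R) {f : α → E} (hf : StronglyMeasurable f) :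
    ∫⁻ l in Ioi (0 : ℝ), (∫⁻ x, ‖{x | l * ‖f x‖ ^ (s - 1) ≤ R}.indicator f x‖ₑ ^ 2 ∂μ) *
        ENNReal.ofReal (l ^ (r - 3)) =
      ENNReal.ofReal (R ^ (r - 2) / (r - 2)) * ∫⁻ x, ‖f x‖ₑ ^ s ∂μ := by
  have hmeas := measurable_enorm_indicator_mul_norm_rpow_le hf (s - 1) R
  simp_rw [← lintegral_mul_const' _ _ ENNReal.ofReal_ne_top]
  rw [lintegral_lintegral_swap, ← lintegral_const_mul' _ _ ENNReal.ofReal_ne_top]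
  · refine lintegral_congr fun x => ?_
    rw [← enorm_sq_mul_lintegral_indicator_rpow hrs hr hR (f x)]
    refine lintegral_congr fun l => ?_
    by_cases hx : l * ‖f x‖ ^ (s - 1) ≤ R <;> simp [hx]
  · exact Measurable.aemeasurable ((hmeas.pow_const 2).mul (by fun_prop))

variable {β F : Type*} [MeasurableSpace β] {ν : Measure β} [NormedAddCommGroup F]

lemma meas_lt_norm_mul_sq_le {G : β → F} (hG : AEStronglyMeasurable G ν) {l : ℝ} (hl : 0 ≤ l) :
    ν {y | l < ‖G y‖} * ENNReal.ofReal (l ^ 2) ≤ ∫⁻ y, ‖G y‖ₑ ^ 2 ∂ν := by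
  refine le_trans ?_ (mul_meas_ge_le_lintegral₀ (hG.enorm.pow_const 2) (ENNReal.ofReal (l ^ 2)))
  rw [mul_comm]
  gcongr with y
  intro hy
  rw [← ofReal_norm, ← ENNReal.ofReal_pow (norm_nonneg _)]
  gcongr

variable {T : (α → E) → β → F} {A : ENNReal} {M : ℝ}

lemma meas_lt_norm_half_mul_rpow_le (hM : 0 < M)
    (hadd : ∀ f g, Integrable f μ → Integrable g μ → ∀ y, ‖T (f + g) y‖ ≤ ‖T f y‖ + ‖T g y‖)
    (hmeas : ∀ f, Integrable f μ → AEStronglyMeasurable (T f) ν)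
    (hone : ∀ f, Integrable f μ → ∀ y, ‖T f y‖ₑ ≤ ENNReal.ofReal M * ∫⁻ x, ‖f x‖ₑ ∂μ)
    (htwo : ∀ f, Integrable f μ → ∫⁻ y, ‖T f y‖ₑ ^ 2 ∂ν ≤ A * ∫⁻ x, ‖f x‖ₑ ^ 2 ∂μ)
    (r : ℝ) {s : ℝ} (hs : 1 < s) {f : α → E} (hfm : StronglyMeasurable f) (hf : Integrable f μ)
    {n : ℝ} (hn : 0 < n) (hfn : ∫⁻ x, ‖f x‖ₑ ^ s ∂μ = ENNReal.ofReal n) {l : ℝ} (hl : 0 < l) :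
    ν {y | l < ‖T f y‖ / 2} * ENNReal.ofReal (l ^ (r - 1)) ≤
      A * ((∫⁻ x, ‖{x | l * ‖f x‖ ^ (s - 1) ≤ M * n}.indicator f x‖ₑ ^ 2 ∂μ) *
        ENNReal.ofReal (l ^ (r - 3))) := by
  set S : Set α := {x | l * ‖f x‖ ^ (s - 1) ≤ M * n}
  have hS : MeasurableSet S := measurableSet_mul_norm_rpow_le hfm _ _ _
  have hlow : Integrable (S.indicator f) μ := hf.indicator hS
  have hhigh : Integrable (Sᶜ.indicator f) μ := hf.indicator hS.compl
  have hbounded : ∀ y, ‖T (Sᶜ.indicator f) y‖ ≤ l := by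
    intro y
    have h := ofReal_mul_lintegral_indicator_compl_le (μ := μ) hs (mul_nonneg hM.le hn.le) hl.le f
    rw [hfn, ENNReal.ofReal_mul hM.le, mul_right_comm,
      ENNReal.mul_le_mul_iff_left (by simpa using hn) ENNReal.ofReal_ne_top] at h
    rw [← ENNReal.ofReal_le_ofReal_iff hl.le, ofReal_norm]
    exact (hone _ hhigh y).trans h
  have hsubset : {y | l < ‖T f y‖ / 2} ⊆ {y | l < ‖T (S.indicator f) y‖} := by
    intro y hy
    have h := hadd _ _ hlow hhigh y
    rw [indicator_self_add_compl] at h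
    simp only [mem_ofPred_eq] at hy ⊢
    linarith [hbounded y]
  have hpow : l ^ (r - 1) = l ^ 2 * l ^ (r - 3) := by
    rw [← Real.rpow_two, ← Real.rpow_add hl]
    ring_nf
  rw [hpow, ENNReal.ofReal_mul (by positivity), ← mul_assoc, ← mul_assoc]
  refine mul_le_mul_left ?_ _
  calc ν {y | l < ‖T f y‖ / 2} * ENNReal.ofReal (l ^ 2)
      ≤ ν {y | l < ‖T (S.indicator f) y‖} * ENNReal.ofReal (l ^ 2) :=
        mul_le_mul_left (measure_mono hsubset) _
    _ ≤ ∫⁻ y, ‖T (S.indicator f) y‖ₑ ^ 2 ∂ν := meas_lt_norm_mul_sq_le (hmeas _ hlow) hl.le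
    _ ≤ _ := htwo _ hlow

lemma lintegral_enorm_rpow_eq_lintegral_meas_lt_half {G : β → F} (hG : AEStronglyMeasurable G ν)
    {r : ℝ} (hr : 0 < r) :
    ∫⁻ y, ‖G y‖ₑ ^ r ∂ν = ENNReal.ofReal (2 ^ r * r) *
      ∫⁻ l in Ioi (0 : ℝ), ν {y | l < ‖G y‖ / 2} * ENNReal.ofReal (l ^ (r - 1)) := by
  have hnorm : ∀ y, ‖G y‖ₑ ^ r = ENNReal.ofReal (2 ^ r) * ENNReal.ofReal ((‖G y‖ / 2) ^ r) := by
    intro y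
    rw [← ENNReal.ofReal_mul (by positivity), ← Real.mul_rpow two_pos.le (by positivity),
      mul_div_cancel₀ _ two_ne_zero, ← ofReal_norm,
      ENNReal.ofReal_rpow_of_nonneg (norm_nonneg _) hr.le]
  rw [lintegral_congr hnorm, lintegral_const_mul' _ _ ENNReal.ofReal_ne_top,
    lintegral_rpow_eq_lintegral_meas_lt_mul ν (ae_of_all _ fun y => by positivity)
      (hG.norm.aemeasurable.div_const 2) hr, ENNReal.ofReal_mul (by positivity), mul_assoc]

/-- Interpolation between an `L¹ → L^∞` and an `L² → L²` bound, by the real method: at height `l`,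
`f` is cut where `l * ‖f x‖ ^ (s - 1) = M * ‖f‖ₛˢ`, so that the large values of `f` contribute at
most `l` to `T f`. -/
lemma lintegral_enorm_rpow_le_of_interpolation [SFinite μ] (hM : 0 < M)
    (hadd : ∀ f g, Integrable f μ → Integrable g μ → ∀ y, ‖T (f + g) y‖ ≤ ‖T f y‖ + ‖T g y‖)
    (hmeas : ∀ f, Integrable f μ → AEStronglyMeasurable (T f) ν)
    (hone : ∀ f, Integrable f μ → ∀ y, ‖T f y‖ₑ ≤ ENNReal.ofReal M * ∫⁻ x, ‖f x‖ₑ ∂μ)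
    (htwo : ∀ f, Integrable f μ → ∫⁻ y, ‖T f y‖ₑ ^ 2 ∂ν ≤ A * ∫⁻ x, ‖f x‖ₑ ^ 2 ∂μ)
    {r s : ℝ} (hrs : r.HolderConjugate s) (hr : 2 < r) {f : α → E} (hfm : StronglyMeasurable f)
    (hf : Integrable f μ) (hfin : ∫⁻ x, ‖f x‖ₑ ^ s ∂μ ≠ ⊤) :
    ∫⁻ y, ‖T f y‖ₑ ^ r ∂ν ≤ ENNReal.ofReal (2 ^ r * r / (r - 2)) * A *
      (ENNReal.ofReal M ^ (r - 2) * (∫⁻ x, ‖f x‖ₑ ^ s ∂μ) ^ (r - 1)) := by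
  have : 0 < r - 2 := sub_pos.2 hr
  by_cases hzero : ∫⁻ x, ‖f x‖ₑ ^ s ∂μ = 0
  · have hf0 : (fun x => ‖f x‖ₑ) =ᵐ[μ] 0 :=
      ENNReal.ae_eq_zero_of_lintegral_rpow_eq_zero hrs.symm.nonneg hfm.enorm.aemeasurable hzero
    have hT : ∀ y, ‖T f y‖ₑ = 0 := fun y => by
      simpa [lintegral_congr_ae hf0] using hone f hf y
    simp [hT, hrs.pos]
  obtain ⟨n, hn, hfn⟩ : ∃ n : ℝ, 0 < n ∧ ∫⁻ x, ‖f x‖ₑ ^ s ∂μ = ENNReal.ofReal n :=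
    ⟨_, ENNReal.toReal_pos hzero hfin, (ENNReal.ofReal_toReal hfin).symm⟩
  rw [lintegral_enorm_rpow_eq_lintegral_meas_lt_half (hmeas f hf) hrs.pos]
  calc _ ≤ ENNReal.ofReal (2 ^ r * r) * ∫⁻ l in Ioi (0 : ℝ),
        A * ((∫⁻ x, ‖{x | l * ‖f x‖ ^ (s - 1) ≤ M * n}.indicator f x‖ₑ ^ 2 ∂μ) *
          ENNReal.ofReal (l ^ (r - 3))) := by
        refine mul_le_mul_right (setLIntegral_mono' measurableSet_Ioi fun l hl => ?_) _
        exact meas_lt_norm_half_mul_rpow_le hM hadd hmeas hone htwo r hrs.symm.lt hfm hf hn hfn hl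
    _ = ENNReal.ofReal (2 ^ r * r) *
        (A * (ENNReal.ofReal ((M * n) ^ (r - 2) / (r - 2)) * ENNReal.ofReal n)) := by
        rw [lintegral_const_mul, lintegral_lintegral_indicator_mul_rpow hrs hr (by positivity) hfm,
          hfn]
        have h := (measurable_enorm_indicator_mul_norm_rpow_le hfm (s - 1) (M * n)).pow_const 2
        exact h.lintegral_prod_right'.mul (by fun_prop)
    _ = _ := by
        rw [hfn, ENNReal.ofReal_rpow_of_pos hM, ENNReal.ofReal_rpow_of_pos hn, mul_left_comm,
          ← ENNReal.ofReal_mul (by positivity), ← ENNReal.ofReal_mul (by positivity),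
          ← ENNReal.ofReal_mul (by positivity), mul_comm _ A, mul_assoc A,
          ← ENNReal.ofReal_mul (by positivity), Real.mul_rpow hM.le hn.le,
          show r - 1 = r - 2 + 1 by ring, Real.rpow_add_one hn.ne']
        congr 2
        ring

end Interpolation

section HardyLittlewoodSobolev

lemma lintegral_comp_abs (g : ℝ → ENNReal) :
    ∫⁻ u : ℝ, g |u| = 2 * ∫⁻ u in Ioi (0 : ℝ), g u := by
  have hpos : ∫⁻ u in Ioi (0 : ℝ), g |u| = ∫⁻ u in Ioi (0 : ℝ), g u :=
    setLIntegral_congr_fun measurableSet_Ioi fun u hu => by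
      rw [abs_of_pos (show 0 < u from hu)]
  have hneg : ∫⁻ u in Iio (0 : ℝ), g |u| = ∫⁻ u in Ioi (0 : ℝ), g |u| := by
    have h := (Measure.measurePreserving_neg (volume : Measure ℝ)).setLIntegral_comp_preimage_emb
      (Homeomorph.neg ℝ).measurableEmbedding (fun u => g |u|) (Ioi 0)
    simpa using h
  rw [← lintegral_add_compl _ (measurableSet_Ioi (a := (0 : ℝ))), compl_Ioi,
    setLIntegral_congr Iio_ae_eq_Iic.symm, hneg, hpos, two_mul]

lemma lintegral_Ioi_ofReal_rpow {s L : ℝ} (hs : s < -1) (hL : 0 < L) :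
    ∫⁻ x in Ioi L, ENNReal.ofReal (x ^ s) = ENNReal.ofReal (-L ^ (s + 1) / (s + 1)) := by
  rw [← ofReal_integral_eq_lintegral_ofReal (integrableOn_Ioi_rpow_of_lt hs hL),
    integral_Ioi_rpow_of_lt hs hL]
  filter_upwards [ae_restrict_mem measurableSet_Ioi] with x hx
  exact Real.rpow_nonneg (hL.trans hx).le s

lemma lintegral_indicator_Iic_rpow_abs_sub {κ : ℝ} (hκ : κ < 1) {R : ℝ} (hR : 0 ≤ R) (t : ℝ) :
    ∫⁻ s, (Iic R).indicator (fun u => ENNReal.ofReal (u ^ (-κ))) |t - s| =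
      ENNReal.ofReal (2 / (1 - κ) * R ^ (1 - κ)) := by
  rw [lintegral_sub_left_eq_self (fun u : ℝ =>
    (Iic R).indicator (fun u => ENNReal.ofReal (u ^ (-κ))) |u|) t, lintegral_comp_abs,
    lintegral_indicator measurableSet_Iic, Measure.restrict_restrict measurableSet_Iic,
    Iic_inter_Ioi, lintegral_Ioc_ofReal_rpow (by linarith) hR, ← ENNReal.ofReal_ofNat,
    ← ENNReal.ofReal_mul two_pos.le, neg_add_eq_sub]
  ring_nf

lemma lintegral_indicator_Ioi_rpow_abs_sub {κ q : ℝ} (hq : 0 < q) (hκ : 1 < κ * q) {R : ℝ}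
    (hR : 0 < R) (t : ℝ) :
    ∫⁻ s, ((Ioi R).indicator (fun u => ENNReal.ofReal (u ^ (-κ))) |t - s|) ^ q =
      ENNReal.ofReal (2 / (κ * q - 1) * R ^ (1 - κ * q)) := by
  have hpow : ∀ u : ℝ, ((Ioi R).indicator (fun u => ENNReal.ofReal (u ^ (-κ))) u) ^ q =
      (Ioi R).indicator (fun u => ENNReal.ofReal (u ^ (-(κ * q)))) u := by
    intro u
    by_cases hu : u ∈ Ioi R
    · have hu0 : 0 < u := hR.trans hu
      rw [indicator_of_mem hu, indicator_of_mem hu,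
        ENNReal.ofReal_rpow_of_nonneg (by positivity) hq.le, ← Real.rpow_mul hu0.le, neg_mul]
    · rw [indicator_of_notMem hu, indicator_of_notMem hu, ENNReal.zero_rpow_of_pos hq]
  simp only [hpow]
  rw [lintegral_sub_left_eq_self (fun u : ℝ =>
    (Ioi R).indicator (fun u => ENNReal.ofReal (u ^ (-(κ * q)))) |u|) t, lintegral_comp_abs,
    lintegral_indicator measurableSet_Ioi, Measure.restrict_restrict measurableSet_Ioi,
    Ioi_inter_Ioi, max_eq_left hR.le, lintegral_Ioi_ofReal_rpow (by linarith) hR,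
    ← ENNReal.ofReal_ofNat, ← ENNReal.ofReal_mul two_pos.le, neg_add_eq_sub,
    ← neg_sub (κ * q) 1, neg_div_neg_eq, div_mul_eq_mul_div, mul_div_assoc]

variable {q p : ℝ} {h : ℝ → ENNReal}

lemma lintegral_min_mul_rpow_abs_sub_le_add (hqp : q.HolderConjugate p) (hq : 2 < q)
    (hm : Measurable h) (x : ENNReal) {R : ℝ} (hR : 0 < R) (t : ℝ) :
    ∫⁻ s, min x (h s) * ENNReal.ofReal (|t - s| ^ (-(2 / q))) ≤
      x * ENNReal.ofReal (2 / (1 - 2 / q) * R ^ (1 - 2 / q)) +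
        (∫⁻ s, h s ^ p) ^ (1 / p) * ENNReal.ofReal (2 / R) ^ (1 / q) := by
  let k : ℝ → ENNReal := fun u => ENNReal.ofReal (u ^ (-(2 / q)))
  have hkm : Measurable k := by fun_prop
  have hnear : Measurable fun s : ℝ => (Iic R).indicator k |t - s| :=
    (hkm.indicator measurableSet_Iic).comp (by fun_prop)
  have hfar : Measurable fun s : ℝ => (Ioi R).indicator k |t - s| :=
    (hkm.indicator measurableSet_Ioi).comp (by fun_prop)
  have hfar_integral : ∫⁻ s, (Ioi R).indicator k |t - s| ^ q = ENNReal.ofReal (2 / R) := by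
    have hmul : 2 / q * q = 2 := div_mul_cancel₀ 2 hqp.ne_zero
    rw [lintegral_indicator_Ioi_rpow_abs_sub hqp.pos (by linarith) hR, hmul,
      show (1 : ℝ) - 2 = -1 by norm_num, Real.rpow_neg_one]
    norm_num [div_eq_mul_inv]
  calc ∫⁻ s, min x (h s) * k |t - s|
      ≤ ∫⁻ s, (x * (Iic R).indicator k |t - s| + h s * (Ioi R).indicator k |t - s|) := by
        refine lintegral_mono fun s => ?_
        by_cases hs : |t - s| ≤ R
        · rw [indicator_of_mem (mem_Iic.2 hs), indicator_of_notMem (notMem_Ioi.2 hs), mul_zero,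
            add_zero]
          exact mul_le_mul_left (min_le_left _ _) _
        · rw [indicator_of_notMem (by simpa using hs), indicator_of_mem (by simpa using hs),
            mul_zero, zero_add]
          exact mul_le_mul_left (min_le_right _ _) _
    _ = x * (∫⁻ s, (Iic R).indicator k |t - s|) + ∫⁻ s, h s * (Ioi R).indicator k |t - s| := by
        rw [lintegral_add_left (hnear.const_mul x), lintegral_const_mul x hnear]
    _ ≤ _ := by
        rw [← lintegral_indicator_Iic_rpow_abs_sub ((div_lt_one hqp.pos).2 hq) hR.le t,
          ← hfar_integral]
        gcongr
        exact ENNReal.lintegral_mul_le_Lp_mul_Lq volume hqp.symm hm.aemeasurable hfar.aemeasurable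

/-- Cutting the kernel at distance `R = ‖h‖ₚᵖ / (h t)ᵖ` balances the two terms of the previous
bound. -/
lemma mul_lintegral_min_mul_rpow_abs_sub_le (hqp : q.HolderConjugate p) (hq : 2 < q)
    (hm : Measurable h) {n : ℝ} (hn : 0 < n) (hhn : ∫⁻ s, h s ^ p = ENNReal.ofReal n) (t : ℝ) :
    h t * ∫⁻ s, min (h t) (h s) * ENNReal.ofReal (|t - s| ^ (-(2 / q))) ≤
      ENNReal.ofReal ((2 / (1 - 2 / q) + 2 ^ (1 / q)) * n ^ (1 - 2 / q)) * h t ^ p := by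
  have h2q : 0 < 1 - 2 / q := sub_pos.2 ((div_lt_one hqp.pos).2 hq)
  have hC : 0 < (2 / (1 - 2 / q) + 2 ^ (1 / q)) * n ^ (1 - 2 / q) := by positivity
  by_cases htop : h t = ⊤
  · rw [htop, ENNReal.top_rpow_of_pos hqp.symm.pos, ENNReal.mul_top (by simpa using hC)]
    exact le_top
  obtain ⟨x, hx, hhx⟩ : ∃ x : ℝ, 0 ≤ x ∧ h t = ENNReal.ofReal x :=
    ⟨_, ENNReal.toReal_nonneg, (ENNReal.ofReal_toReal htop).symm⟩
  rcases hx.eq_or_lt with hx0 | hx0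
  · simp [hhx, ← hx0]
  have hR : 0 < n / x ^ p := by positivity
  refine (mul_le_mul_right
    (lintegral_min_mul_rpow_abs_sub_le_add hqp hq hm (h t) hR t) (h t)).trans (le_of_eq ?_)
  rw [hhn, hhx, ENNReal.ofReal_rpow_of_pos hn, ENNReal.ofReal_rpow_of_pos (by positivity),
    ENNReal.ofReal_rpow_of_pos hx0, ← ENNReal.ofReal_mul hx, ← ENNReal.ofReal_mul (by positivity),
    ← ENNReal.ofReal_add (by positivity) (by positivity), ← ENNReal.ofReal_mul hx,
    ← ENNReal.ofReal_mul hC.le]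
  congr 1
  have hp : 1 / p = 1 - 2 / q + 1 / q := by
    linarith [hqp.inv_add_inv_eq_one, one_div p, one_div q, show 2 / q = 2 * q⁻¹ by ring]
  have hpq : p * (1 / q) = p - 1 := by rw [mul_one_div, hqp.symm.div_conj_eq_sub_one]
  have hnear : x * (x * (n / x ^ p) ^ (1 - 2 / q)) = n ^ (1 - 2 / q) * x ^ p := by
    rw [Real.div_rpow hn.le (by positivity), ← Real.rpow_mul hx,
      show p * (1 - 2 / q) = 2 - p by linear_combination (-2) * hpq, Real.rpow_sub hx0,
      Real.rpow_two]
    field_simp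
  have hfar : x * (n ^ (1 / p) * (2 / (n / x ^ p)) ^ (1 / q)) =
      2 ^ (1 / q) * (n ^ (1 - 2 / q) * x ^ p) := by
    rw [Real.div_rpow two_pos.le hR.le, Real.div_rpow hn.le (by positivity), ← Real.rpow_mul hx,
      hpq, hp, Real.rpow_add hn, Real.rpow_sub_one hx0.ne']
    have : n ^ (1 / q) ≠ 0 := by positivity
    field_simp
  linear_combination 2 / (1 - 2 / q) * hnear + hfar

lemma mul_le_add_mul_min (x y : ENNReal) : x * y ≤ (x + y) * min x y := by
  rw [← max_mul_min x y]
  gcongr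
  exact max_le le_self_add le_add_self

lemma lintegral_lintegral_mul_mul_le_two_mul_min {α : Type*} [MeasurableSpace α] {μ : Measure α}
    [SFinite μ] {h : α → ENNReal} (hm : Measurable h) {K : α → α → ENNReal}
    (hK : Measurable (Function.uncurry K)) (hsymm : ∀ t s, K t s = K s t) :
    ∫⁻ t, ∫⁻ s, h t * h s * K t s ∂μ ∂μ ≤
      2 * ∫⁻ t, h t * ∫⁻ s, min (h t) (h s) * K t s ∂μ ∂μ := by
  set Φ : α → α → ENNReal := fun t s => min (h t) (h s) * K t s
  have hΦ : Measurable (Function.uncurry fun t s => h t * Φ t s) := by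
    have hfst : Measurable fun z : α × α => h z.1 := hm.comp measurable_fst
    have hsnd : Measurable fun z : α × α => h z.2 := hm.comp measurable_snd
    exact hfst.mul ((hfst.min hsnd).mul hK)
  calc ∫⁻ t, ∫⁻ s, h t * h s * K t s ∂μ ∂μ
      ≤ ∫⁻ t, ∫⁻ s, (h t * Φ t s + h s * Φ s t) ∂μ ∂μ := by
        refine lintegral_mono fun t => lintegral_mono fun s => ?_
        refine (mul_le_mul_left (mul_le_add_mul_min (h t) (h s)) _).trans_eq ?_
        simp only [Φ]
        rw [hsymm s t, min_comm (h s), mul_assoc, add_mul]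
    _ = ∫⁻ t, (∫⁻ s, h t * Φ t s ∂μ + ∫⁻ s, h s * Φ s t ∂μ) ∂μ :=
        lintegral_congr fun t => lintegral_add_left (hΦ.comp measurable_prodMk_left) _
    _ = 2 * ∫⁻ t, ∫⁻ s, h t * Φ t s ∂μ ∂μ := by
        have houter : Measurable fun t => ∫⁻ s, h t * Φ t s ∂μ := hΦ.lintegral_prod_right'
        rw [lintegral_add_left houter, two_mul, lintegral_lintegral_swap
          (f := fun t s => h s * Φ s t) (hΦ.comp measurable_swap).aemeasurable]
    _ = 2 * ∫⁻ t, h t * ∫⁻ s, Φ t s ∂μ ∂μ := by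
        congr! 3 with t
        exact lintegral_const_mul _
          ((measurable_const.min hm).mul (hK.comp measurable_prodMk_left))

/-- The diagonal case of the Hardy–Littlewood–Sobolev inequality on the line. -/
lemma lintegral_lintegral_mul_mul_rpow_abs_sub_le (hqp : q.HolderConjugate p) (hq : 2 < q)
    (hm : Measurable h) (hfin : ∫⁻ s, h s ^ p ≠ ⊤) :
    ∫⁻ t, ∫⁻ s, h t * h s * ENNReal.ofReal (|t - s| ^ (-(2 / q))) ≤
      ENNReal.ofReal (2 * (2 / (1 - 2 / q) + 2 ^ (1 / q))) * (∫⁻ s, h s ^ p) ^ (2 / p) := by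
  have h2q : 0 < 1 - 2 / q := sub_pos.2 ((div_lt_one hqp.pos).2 hq)
  by_cases hzero : ∫⁻ s, h s ^ p = 0
  · have hh0 := ENNReal.ae_eq_zero_of_lintegral_rpow_eq_zero hqp.symm.nonneg hm.aemeasurable hzero
    refine (lintegral_eq_zero_of_ae_eq_zero ?_).trans_le zero_le
    filter_upwards [hh0] with t ht
    simp [ht]
  obtain ⟨n, hn, hhn⟩ : ∃ n : ℝ, 0 < n ∧ ∫⁻ s, h s ^ p = ENNReal.ofReal n :=
    ⟨_, ENNReal.toReal_pos hzero hfin, (ENNReal.ofReal_toReal hfin).symm⟩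
  calc ∫⁻ t, ∫⁻ s, h t * h s * ENNReal.ofReal (|t - s| ^ (-(2 / q)))
      ≤ 2 * ∫⁻ t, h t * ∫⁻ s, min (h t) (h s) * ENNReal.ofReal (|t - s| ^ (-(2 / q))) :=
        lintegral_lintegral_mul_mul_le_two_mul_min hm (by fun_prop)
          fun t s => by rw [abs_sub_comm]
    _ ≤ 2 * ∫⁻ t, ENNReal.ofReal ((2 / (1 - 2 / q) + 2 ^ (1 / q)) * n ^ (1 - 2 / q)) *
          h t ^ p := by
        refine mul_le_mul_right (lintegral_mono fun t => ?_) _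
        exact mul_lintegral_min_mul_rpow_abs_sub_le hqp hq hm hn hhn t
    _ = _ := by
        have hp : 2 / p = 1 - 2 / q + 1 := by
          linear_combination 2 * hqp.inv_add_inv_eq_one
        rw [lintegral_const_mul' _ _ ENNReal.ofReal_ne_top, hhn, ENNReal.ofReal_rpow_of_pos hn, hp,
          Real.rpow_add_one hn.ne', ← ENNReal.ofReal_ofNat, ← ENNReal.ofReal_mul (by positivity),
          ← ENNReal.ofReal_mul two_pos.le, ← ENNReal.ofReal_mul (by positivity)]
        ring_nf

end HardyLittlewoodSobolev

section Dispersion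

variable {a r s : ℝ}

lemma exists_eLpNorm'_besselSemigroup_le (ha : 0 ≤ a) (hrs : r.HolderConjugate s) (hr : 2 < r) :
    ∃ D : ENNReal, D ≠ ⊤ ∧ ∀ (p : ℂ) (f : ℝ → ℂ), 0 < p.re → StronglyMeasurable f →
      Integrable f (powMeasure a) → eLpNorm' f s (powMeasure a) ≠ ⊤ →
      eLpNorm' (besselSemigroup a p f) r (powMeasure a) ≤
        D * (ENNReal.ofReal (‖p‖ ^ (-((a + 1) * (1 / 2 - 1 / r)))) *
          eLpNorm' f s (powMeasure a)) := by
  have hc : 0 < 1 / 2 * (Real.Gamma ((a + 1) / 2))⁻¹ := by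
    have := Real.Gamma_pos_of_pos (show 0 < (a + 1) / 2 by linarith)
    positivity
  have hr0 := hrs.pos
  set c : ℝ := 1 / 2 * (Real.Gamma ((a + 1) / 2))⁻¹
  obtain ⟨A, hA⟩ : ∃ A : ENNReal, A = ENNReal.ofReal (2 ^ r * r / (r - 2)) *
    ENNReal.ofReal (4 ^ ((a + 1) / 2) / 4) ^ 2 := ⟨_, rfl⟩
  have hAtop : A ≠ ⊤ := by rw [hA]; finiteness
  refine ⟨A ^ (1 / r) * ENNReal.ofReal (c ^ ((r - 2) * (1 / r))), by finiteness, ?_⟩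
  intro p f hp hfm hf hfin
  have hp0 : 0 < ‖p‖ := norm_pos_iff.2 fun h => by simp [h] at hp
  have hfin' : ∫⁻ x, ‖f x‖ₑ ^ s ∂powMeasure a ≠ ⊤ := fun h =>
    hfin (by simp [eLpNorm', h, hrs.symm.pos])
  have hinterpolation := lintegral_enorm_rpow_le_of_interpolation (μ := powMeasure a)
    (T := besselSemigroup a p) (M := c * ‖p‖ ^ (-((a + 1) / 2))) (by positivity)
    (fun f g hf hg y => by rw [besselSemigroup_add ha hp hf hg]; exact norm_add_le _ _)
    (fun f hf => (continuous_besselSemigroup ha hp hf).aestronglyMeasurable)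
    (fun f hf y => enorm_besselSemigroup_le ha hp hf y)
    (fun f hf => lintegral_enorm_besselSemigroup_sq_le ha hp hf) hrs hr hfm hf hfin'
  rw [← hA] at hinterpolation
  have hexponent : (r - 1) * (1 / r) = 1 / s := by
    have hinv := hrs.inv_add_inv_eq_one
    have hself : r * (1 / r) = 1 := mul_one_div_cancel hr0.ne'
    simp only [one_div] at hself ⊢
    linear_combination hself - hinv
  have hdecay : -((a + 1) / 2) * ((r - 2) * (1 / r)) = -((a + 1) * (1 / 2 - 1 / r)) := by
    field_simp
  calc eLpNorm' (besselSemigroup a p f) r (powMeasure a)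
      ≤ (A * (ENNReal.ofReal (c * ‖p‖ ^ (-((a + 1) / 2))) ^ (r - 2) *
          (∫⁻ x, ‖f x‖ₑ ^ s ∂powMeasure a) ^ (r - 1))) ^ (1 / r) :=
        ENNReal.rpow_le_rpow hinterpolation (by positivity)
    _ = _ := by
        rw [ENNReal.mul_rpow_of_nonneg A _ (by positivity),
          ENNReal.mul_rpow_of_nonneg _ _ (by positivity), ← ENNReal.rpow_mul, ← ENNReal.rpow_mul,
          hexponent, ENNReal.ofReal_rpow_of_pos (by positivity),
          Real.mul_rpow hc.le (by positivity), ← Real.rpow_mul hp0.le, hdecay,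
          ENNReal.ofReal_mul (by positivity), eLpNorm']
        ring

lemma exists_enorm_integral_cexp_mul_besselTransform_mul_conj_le (ha : 0 ≤ a)
    (hrs : r.HolderConjugate s) (hr : 2 < r) :
    ∃ D : ENNReal, D ≠ ⊤ ∧ ∀ (p : ℂ) (f g : ℝ → ℂ), 0 < p.re → StronglyMeasurable f →
      Integrable f (powMeasure a) → Integrable g (powMeasure a) →
      eLpNorm' f s (powMeasure a) ≠ ⊤ →
      ‖∫ ξ, Complex.exp (-p * (ξ : ℂ) ^ 2) * besselTransform a f ξ *
          (starRingEnd ℂ) (besselTransform a g ξ) ∂powMeasure a‖ₑ ≤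
        D * (ENNReal.ofReal (‖p‖ ^ (-((a + 1) * (1 / 2 - 1 / r)))) *
          (eLpNorm' f s (powMeasure a) * eLpNorm' g s (powMeasure a))) := by
  obtain ⟨D, hD, hbound⟩ := exists_eLpNorm'_besselSemigroup_le ha hrs hr
  refine ⟨D, hD, fun p f g hp hfm hf hg hfin => ?_⟩
  rw [integral_cexp_mul_besselTransform_mul_conj ha hp hf hg]
  calc ‖∫ y, besselSemigroup a p f y * (starRingEnd ℂ) (g y) ∂powMeasure a‖ₑ
      ≤ ∫⁻ y, ‖besselSemigroup a p f y‖ₑ * ‖g y‖ₑ ∂powMeasure a := by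
        refine (enorm_integral_le_lintegral_enorm _).trans_eq ?_
        simp only [enorm_mul, RCLike.enorm_conj]
    _ ≤ eLpNorm' (besselSemigroup a p f) r (powMeasure a) * eLpNorm' g s (powMeasure a) :=
        ENNReal.lintegral_mul_le_Lp_mul_Lq _ hrs
          (continuous_besselSemigroup ha hp hf).aestronglyMeasurable.enorm
          hg.aestronglyMeasurable.enorm
    _ ≤ _ := by
        rw [← mul_assoc (ENNReal.ofReal _), ← mul_assoc]
        gcongr
        exact hbound p f hp hfm hf hfin

lemma norm_sub_mul_I_rpow_le {κ : ℝ} (hκ : 0 ≤ κ) (ε : ℝ) {u : ℝ} (hu : u ≠ 0) :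
    ‖(ε : ℂ) - u * Complex.I‖ ^ (-κ) ≤ |u| ^ (-κ) := by
  refine Real.rpow_le_rpow_of_nonpos (abs_pos.2 hu) ?_ (neg_nonpos.2 hκ)
  simpa using Complex.abs_im_le_norm ((ε : ℂ) - u * Complex.I)

end Dispersion

/-- The Fourier–Bessel transform of `v t x` restricted to the half-parabola; it is the
Fourier–Hankel transform at `(ξ, -ξ² / 2π)` up to the constant in
`fourierHankel_eq_parabolaTransform`. Time is the first argument. -/
noncomputable def parabolaTransform (a : ℝ) (v : ℝ → ℝ → ℂ) (ξ : ℝ) : ℂ :=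
  ∫ t : ℝ, Complex.exp ((ξ ^ 2 * t : ℝ) * Complex.I) * besselTransform a (v t) ξ

/-- The norm of `v t x` in `L^q_t L^r_a`, as an extended nonnegative real; time is the first
argument. -/
noncomputable def eMixedNorm (a q r : ℝ) (v : ℝ → ℝ → ℂ) : ENNReal :=
  eLpNorm' (fun t => eLpNorm' (v t) r (powMeasure a)) q volume

section ParabolaTransform

variable {a : ℝ} {v w : ℝ → ℝ → ℂ}

lemma parabolaTransform_congr_ae (h : ∀ᵐ t, v t =ᵐ[powMeasure a] w t) :
    parabolaTransform a v = parabolaTransform a w := by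
  ext ξ
  refine integral_congr_ae ?_
  filter_upwards [h] with t ht
  congr 1
  refine integral_congr_ae ?_
  filter_upwards [ht] with x hx
  rw [hx]

lemma eMixedNorm_congr_ae {q r : ℝ} (h : ∀ᵐ t, v t =ᵐ[powMeasure a] w t) :
    eMixedNorm a q r v = eMixedNorm a q r w :=
  eLpNorm'_congr_ae (h.mono fun _ ht => eLpNorm'_congr_ae ht)

lemma eMixedNorm_eq_lintegral (a q r : ℝ) (v : ℝ → ℝ → ℂ) :
    eMixedNorm a q r v = (∫⁻ t, eLpNorm' (v t) r (powMeasure a) ^ q) ^ (1 / q) := by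
  simp only [eMixedNorm, eLpNorm'_eq_lintegral_enorm (q := q), enorm_eq_self]

lemma lintegral_eLpNorm'_rpow_ne_top {q r : ℝ} (hq : 0 < q) (hfin : eMixedNorm a q r v ≠ ⊤) :
    ∫⁻ t, eLpNorm' (v t) r (powMeasure a) ^ q ≠ ⊤ := fun h => hfin <| by
  rw [eMixedNorm_eq_lintegral, h, ENNReal.top_rpow_of_pos (one_div_pos.2 hq)]

lemma aemeasurable_eLpNorm'_slice
    (hv : AEStronglyMeasurable (Function.uncurry v) (volume.prod (powMeasure a))) (r : ℝ) :
    AEMeasurable fun t => eLpNorm' (v t) r (powMeasure a) :=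
  ((hv.enorm.pow_const r).lintegral_prod_right').pow_const (1 / r)

lemma eLpNorm'_slice_ne_top_ae {q r : ℝ} (hq : 0 < q)
    (hv : AEStronglyMeasurable (Function.uncurry v) (volume.prod (powMeasure a)))
    (hfin : eMixedNorm a q r v ≠ ⊤) : ∀ᵐ t, eLpNorm' (v t) r (powMeasure a) ≠ ⊤ := by
  filter_upwards [ae_lt_top' ((aemeasurable_eLpNorm'_slice hv r).pow_const q)
    (lintegral_eLpNorm'_rpow_ne_top hq hfin)] with t ht htop
  rw [htop, ENNReal.top_rpow_of_pos hq] at ht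
  exact ht.ne rfl

lemma measurable_eLpNorm'_slice (hv : StronglyMeasurable (Function.uncurry v)) (r : ℝ) :
    Measurable fun t => eLpNorm' (v t) r (powMeasure a) :=
  ((hv.enorm.pow_const r).lintegral_prod_right').pow_const (1 / r)

lemma stronglyMeasurable_besselTransform_slice (ha : 0 ≤ a)
    (hv : StronglyMeasurable (Function.uncurry v)) :
    StronglyMeasurable fun z : ℝ × ℝ => besselTransform a (v z.2) z.1 := by
  have hkernel : Continuous fun y : (ℝ × ℝ) × ℝ =>
      (besselKernel ((a + 1) / 2) (y.1.1 * y.2) : ℂ) :=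
    Complex.continuous_ofReal.comp ((continuous_besselKernel (by linarith)).comp (by fun_prop))
  have hslice : StronglyMeasurable fun y : (ℝ × ℝ) × ℝ => v y.1.2 y.2 :=
    hv.comp_measurable ((measurable_snd.comp measurable_fst).prodMk measurable_snd)
  exact (hslice.mul hkernel.stronglyMeasurable).integral_prod_right'

lemma stronglyMeasurable_parabolaTransform (ha : 0 ≤ a)
    (hv : AEStronglyMeasurable (Function.uncurry v) (volume.prod (powMeasure a))) :
    StronglyMeasurable (parabolaTransform a v) := by
  let w : ℝ → ℝ → ℂ := Function.curry (hv.mk (Function.uncurry v))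
  have hvw : ∀ᵐ t, v t =ᵐ[powMeasure a] w t := Measure.ae_ae_of_ae_prod hv.ae_eq_mk
  have hw : StronglyMeasurable (Function.uncurry w) := hv.stronglyMeasurable_mk
  rw [parabolaTransform_congr_ae hvw]
  have hexp : StronglyMeasurable fun z : ℝ × ℝ =>
      Complex.exp ((z.1 ^ 2 * z.2 : ℝ) * Complex.I) := Continuous.stronglyMeasurable (by fun_prop)
  exact (hexp.mul (stronglyMeasurable_besselTransform_slice ha hw)).integral_prod_right'

lemma norm_parabolaTransform_le (ha : 0 ≤ a)
    (hint : Integrable (Function.uncurry v) (volume.prod (powMeasure a))) (ξ : ℝ) :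
    ‖parabolaTransform a v ξ‖ ≤
      ∫ t, (∫ x, ‖v t x‖ ∂powMeasure a) * (Real.Gamma ((a + 1) / 2))⁻¹ := by
  refine norm_integral_le_of_norm_le (hint.integral_norm_prod_left.mul_const _) ?_
  filter_upwards [hint.prod_right_ae] with t ht
  rw [norm_mul, Complex.norm_exp_ofReal_mul_I, one_mul]
  exact norm_besselTransform_le ha ht ξ

lemma integrable_cexp_mul_besselTransform_slice_mul_conj (ha : 0 ≤ a)
    (hv : StronglyMeasurable (Function.uncurry v))
    (hint : Integrable (Function.uncurry v) (volume.prod (powMeasure a))) {ε : ℝ} (hε : 0 < ε) :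
    Integrable (Function.uncurry fun (ξ : ℝ) (z : ℝ × ℝ) =>
      Complex.exp (-((ε : ℂ) - (z.1 - z.2 : ℝ) * Complex.I) * (ξ : ℂ) ^ 2) *
        besselTransform a (v z.1) ξ * (starRingEnd ℂ) (besselTransform a (v z.2) ξ))
      ((powMeasure a).prod (volume.prod volume)) := by
  have hslice := stronglyMeasurable_besselTransform_slice ha hv
  have hB := hint.integral_norm_prod_left.mul_const (Real.Gamma ((a + 1) / 2))⁻¹
  have hfst : ∀ᵐ y ∂(powMeasure a).prod ((volume : Measure ℝ).prod (volume : Measure ℝ)),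
      Integrable (v y.2.1) (powMeasure a) :=
    (Measure.quasiMeasurePreserving_fst.comp Measure.quasiMeasurePreserving_snd).ae
      hint.prod_right_ae
  have hsnd : ∀ᵐ y ∂(powMeasure a).prod ((volume : Measure ℝ).prod (volume : Measure ℝ)),
      Integrable (v y.2.2) (powMeasure a) :=
    (Measure.quasiMeasurePreserving_snd.comp Measure.quasiMeasurePreserving_snd).ae
      hint.prod_right_ae
  refine ((integrable_exp_neg_mul_sq_powMeasure (by linarith) hε).mul_prod
    (hB.mul_prod hB)).mono' (StronglyMeasurable.aestronglyMeasurable ?_) ?_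
  · refine ((Continuous.stronglyMeasurable (by fun_prop)).mul ?_).mul
      (Complex.continuous_conj.comp_stronglyMeasurable ?_)
    · exact hslice.comp_measurable (measurable_fst.prodMk (measurable_fst.comp measurable_snd))
    · exact hslice.comp_measurable (measurable_fst.prodMk (measurable_snd.comp measurable_snd))
  · filter_upwards [hfst, hsnd] with y hy₁ hy₂
    have hre : ((ε : ℂ) - (y.2.1 - y.2.2 : ℝ) * Complex.I).re = ε := by simp
    rw [Function.uncurry_def, norm_mul, norm_mul, norm_cexp_neg_mul_sq, hre, RCLike.norm_conj,
      mul_assoc]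
    gcongr
    · exact norm_besselTransform_le ha hy₁ _
    · exact norm_besselTransform_le ha hy₂ _

lemma integral_cexp_mul_parabolaTransform_mul_conj (ha : 0 ≤ a)
    (hv : StronglyMeasurable (Function.uncurry v))
    (hint : Integrable (Function.uncurry v) (volume.prod (powMeasure a))) {ε : ℝ} (hε : 0 < ε) :
    ∫ ξ, Complex.exp (-(ε : ℂ) * (ξ : ℂ) ^ 2) * parabolaTransform a v ξ *
        (starRingEnd ℂ) (parabolaTransform a v ξ) ∂powMeasure a =
      ∫ z : ℝ × ℝ, ∫ ξ, Complex.exp (-((ε : ℂ) - (z.1 - z.2 : ℝ) * Complex.I) * (ξ : ℂ) ^ 2) *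
        besselTransform a (v z.1) ξ *
          (starRingEnd ℂ) (besselTransform a (v z.2) ξ) ∂powMeasure a := by
  rw [Measure.volume_eq_prod, ← integral_integral_swap
    (integrable_cexp_mul_besselTransform_slice_mul_conj ha hv hint hε)]
  refine integral_congr_ae (ae_of_all _ fun ξ => ?_)
  simp only [parabolaTransform]
  rw [← integral_conj, mul_assoc, ← integral_prod_mul, ← integral_const_mul]
  refine integral_congr_ae (ae_of_all _ fun z => ?_)
  have hexp : Complex.exp (-((ε : ℂ) - (z.1 - z.2 : ℝ) * Complex.I) * (ξ : ℂ) ^ 2) =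
      Complex.exp (-(ε : ℂ) * (ξ : ℂ) ^ 2) * Complex.exp ((ξ ^ 2 * z.1 : ℝ) * Complex.I) *
        Complex.exp ((ξ ^ 2 * z.2 : ℝ) * -Complex.I) := by
    rw [← Complex.exp_add, ← Complex.exp_add]
    congr 1
    push_cast
    ring
  simp only [map_mul, ← Complex.exp_conj, Complex.conj_I, Complex.conj_ofReal, hexp]
  ring

end ParabolaTransform

section RestrictionBound

variable {a q q' r r' : ℝ}

lemma ae_fst_ne_snd : ∀ᵐ z : ℝ × ℝ, z.1 ≠ z.2 := by
  refine (Measure.ae_prod_mem_iff_ae_ae_mem (measurableSet_diagonal (α := ℝ)).compl).2 ?_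
  refine ae_of_all _ fun t => ?_
  filter_upwards [compl_mem_ae_iff.2 (measure_singleton t)] with s hs h
  exact hs h.symm

lemma exists_lintegral_enorm_parabolaTransform_sq_le_of_stronglyMeasurable (ha : 0 ≤ a)
    (hr : 2 < r) (hrr' : r.HolderConjugate r') (hq : 2 < q) (hqq' : q.HolderConjugate q')
    (hqr : 2 / q = (a + 1) * (1 / 2 - 1 / r)) :
    ∃ K : ENNReal, K ≠ ⊤ ∧ ∀ v : ℝ → ℝ → ℂ, StronglyMeasurable (Function.uncurry v) →
      Integrable (Function.uncurry v) (volume.prod (powMeasure a)) → eMixedNorm a q' r' v ≠ ⊤ →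
      ∫⁻ ξ, ‖parabolaTransform a v ξ‖ₑ ^ 2 ∂powMeasure a ≤ K * eMixedNorm a q' r' v ^ 2 := by
  obtain ⟨D, hD, hbound⟩ :=
    exists_enorm_integral_cexp_mul_besselTransform_mul_conj_le ha hrr' hr
  refine ⟨D * ENNReal.ofReal (2 * (2 / (1 - 2 / q) + 2 ^ (1 / q))), by finiteness, ?_⟩
  intro v hv hint hfin
  refine lintegral_enorm_sq_le_of_forall_enorm_integral_cexp_le (by linarith)
    (stronglyMeasurable_parabolaTransform ha hint.1).aestronglyMeasurable
    (norm_parabolaTransform_le ha hint) fun ε hε => ?_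
  rw [integral_cexp_mul_parabolaTransform_mul_conj ha hv hint hε]
  set N : ℝ → ENNReal := fun t => eLpNorm' (v t) r' (powMeasure a)
  have hN : Measurable N := measurable_eLpNorm'_slice hv r'
  have hnorm : (∫⁻ t, N t ^ q') ^ (2 / q') = eMixedNorm a q' r' v ^ 2 := by
    rw [← ENNReal.rpow_two, eMixedNorm_eq_lintegral, ← ENNReal.rpow_mul, one_div_mul_eq_div]
  have hgood : ∀ᵐ t, N t ≠ ⊤ ∧ Integrable (v t) (powMeasure a) :=
    (eLpNorm'_slice_ne_top_ae hqq'.symm.pos hint.1 hfin).and hint.prod_right_ae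
  calc _ ≤ ∫⁻ z : ℝ × ℝ, ‖∫ ξ, Complex.exp (-((ε : ℂ) - (z.1 - z.2 : ℝ) * Complex.I) *
          (ξ : ℂ) ^ 2) * besselTransform a (v z.1) ξ *
          (starRingEnd ℂ) (besselTransform a (v z.2) ξ) ∂powMeasure a‖ₑ :=
        enorm_integral_le_lintegral_enorm _
    _ ≤ ∫⁻ z : ℝ × ℝ, D * (N z.1 * N z.2 * ENNReal.ofReal (|z.1 - z.2| ^ (-(2 / q)))) := by
        refine lintegral_mono_ae ?_
        filter_upwards [Measure.quasiMeasurePreserving_fst.ae hgood,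
          Measure.quasiMeasurePreserving_snd.ae hgood, ae_fst_ne_snd] with z hz₁ hz₂ hz
        refine (hbound _ (v z.1) (v z.2) (by simpa using hε)
          (hv.comp_measurable measurable_prodMk_left) hz₁.2 hz₂.2 hz₁.1).trans ?_
        rw [← hqr, mul_comm (ENNReal.ofReal _)]
        exact mul_le_mul_right (mul_le_mul_right (ENNReal.ofReal_le_ofReal
          (norm_sub_mul_I_rpow_le (by positivity) ε (sub_ne_zero.2 hz))) _) _
    _ = D * ∫⁻ t, ∫⁻ s, N t * N s * ENNReal.ofReal (|t - s| ^ (-(2 / q))) := by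
        rw [lintegral_const_mul' _ _ hD, Measure.volume_eq_prod, lintegral_prod]
        exact (((hN.comp measurable_fst).mul (hN.comp measurable_snd)).mul
          (by fun_prop)).aemeasurable
    _ ≤ _ := by
        rw [mul_assoc, ← hnorm]
        gcongr
        exact lintegral_lintegral_mul_mul_rpow_abs_sub_le hqq' hq hN
          (lintegral_eLpNorm'_rpow_ne_top hqq'.symm.pos hfin)

theorem exists_lintegral_enorm_parabolaTransform_sq_le (ha : 0 ≤ a)
    (hr : 2 < r) (hrr' : r.HolderConjugate r') (hq : 2 < q) (hqq' : q.HolderConjugate q')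
    (hqr : 2 / q = (a + 1) * (1 / 2 - 1 / r)) :
    ∃ K : ENNReal, K ≠ ⊤ ∧ ∀ v : ℝ → ℝ → ℂ,
      Integrable (Function.uncurry v) (volume.prod (powMeasure a)) → eMixedNorm a q' r' v ≠ ⊤ →
      ∫⁻ ξ, ‖parabolaTransform a v ξ‖ₑ ^ 2 ∂powMeasure a ≤ K * eMixedNorm a q' r' v ^ 2 := by
  obtain ⟨K, hK, hbound⟩ :=
    exists_lintegral_enorm_parabolaTransform_sq_le_of_stronglyMeasurable ha hr hrr' hq hqq' hqr
  refine ⟨K, hK, fun v hint hfin => ?_⟩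
  let w : ℝ → ℝ → ℂ := Function.curry (hint.1.mk (Function.uncurry v))
  have hvw : ∀ᵐ t, v t =ᵐ[powMeasure a] w t := Measure.ae_ae_of_ae_prod hint.1.ae_eq_mk
  rw [parabolaTransform_congr_ae hvw, eMixedNorm_congr_ae hvw]
  rw [eMixedNorm_congr_ae hvw] at hfin
  exact hbound w hint.1.stronglyMeasurable_mk (hint.congr hint.1.ae_eq_mk) hfin

end RestrictionBound

section FourierHankel

lemma besselJ_eq_rpow_mul_besselKernel (a : ℝ) {z : ℝ} (hz : 0 < z) :
    besselJ (((a - 1) / 2 : ℝ) : ℂ) z =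
      (((z / 2) ^ ((a - 1) / 2) * besselKernel ((a + 1) / 2) z : ℝ) : ℂ) := by
  have hz2 : ((z / 2 : ℝ) : ℂ) ≠ 0 := by exact_mod_cast (half_pos hz).ne'
  rw [besselJ, besselKernel, Complex.ofReal_mul, Complex.ofReal_tsum, ← tsum_mul_left]
  refine tsum_congr fun k => ?_
  have hGamma : Complex.Gamma ((((a - 1) / 2 : ℝ) : ℂ) + k + 1) =
      (Real.Gamma ((a + 1) / 2 + k) : ℂ) := by
    rw [← Complex.Gamma_ofReal]
    congr 1
    push_cast
    ring
  have hpow : ((z : ℂ) / 2) ^ (2 * (k : ℂ) + (((a - 1) / 2 : ℝ) : ℂ)) =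
      (((z / 2) ^ (2 * k) * (z / 2) ^ ((a - 1) / 2) : ℝ) : ℂ) := by
    rw [← Complex.ofReal_ofNat 2, ← Complex.ofReal_div, Complex.cpow_add _ _ hz2,
      Complex.ofReal_mul, Complex.ofReal_cpow (half_pos hz).le, Complex.ofReal_pow,
      ← Complex.cpow_natCast]
    push_cast
    rfl
  rw [hGamma, hpow, Complex.Gamma_nat_eq_factorial, besselCoeff]
  push_cast
  rw [neg_pow ((z : ℂ) ^ 2 / 4), pow_mul, div_pow (z : ℂ) 2 2, show (2 : ℂ) ^ 2 = 4 by norm_num]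
  ring

lemma rpow_neg_mul_rpow_mul_rpow_add_one (ν : ℝ) {ξ y : ℝ} (hξ : 0 < ξ) (hy : 0 < y) :
    ξ ^ (-ν) * ((ξ * y / 2) ^ ν * y ^ (ν + 1)) = 2 ^ (-ν) * y ^ (2 * ν + 1) := by
  have hξν : ξ ^ ν ≠ 0 := (Real.rpow_pos_of_pos hξ ν).ne'
  have hyν : y ^ (2 * ν + 1) = y ^ ν * y ^ (ν + 1) := by
    rw [← Real.rpow_add hy]
    ring_nf
  rw [hyν, Real.div_rpow (by positivity) zero_le_two, Real.mul_rpow hξ.le hy.le,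
    Real.rpow_neg hξ.le, Real.rpow_neg zero_le_two]
  field_simp

lemma hankel_eq_besselTransform (a : ℝ) (φ : ℝ → ℂ) {ξ : ℝ} (hξ : 0 < ξ) :
    hankel (((a - 1) / 2 : ℝ) : ℂ) φ ξ =
      ((2 : ℝ) ^ (-((a - 1) / 2)) : ℝ) * besselTransform a φ ξ := by
  rw [hankel, besselTransform, integral_powMeasure, ← integral_const_mul, ← integral_const_mul]
  refine setIntegral_congr_fun measurableSet_Ioi fun y (hy : 0 < y) => ?_
  have hyν : (y : ℂ) ^ ((((a - 1) / 2 : ℝ) : ℂ) + 1) = ((y ^ ((a - 1) / 2 + 1) : ℝ) : ℂ) := by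
    rw [Complex.ofReal_cpow hy.le, Complex.ofReal_add, Complex.ofReal_one]
  have hξν : (ξ : ℂ) ^ (-(((a - 1) / 2 : ℝ) : ℂ)) = ((ξ ^ (-((a - 1) / 2)) : ℝ) : ℂ) := by
    rw [Complex.ofReal_cpow hξ.le, Complex.ofReal_neg]
  have hweight : 2 ^ (-((a - 1) / 2)) * y ^ a =
      ξ ^ (-((a - 1) / 2)) * ((ξ * y / 2) ^ ((a - 1) / 2) * y ^ ((a - 1) / 2 + 1)) := by
    rw [rpow_neg_mul_rpow_mul_rpow_add_one _ hξ hy]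
    ring_nf
  simp only [besselJ_eq_rpow_mul_besselKernel a (mul_pos hξ hy), hyν, hξν, Complex.real_smul]
  rw [← mul_assoc (((2 : ℝ) ^ (-((a - 1) / 2)) : ℝ) : ℂ), ← Complex.ofReal_mul, hweight]
  push_cast
  ring

lemma fourierHankel_eq_parabolaTransform (a : ℝ) (F : ℝ → ℝ → ℂ) {ξ : ℝ} (hξ : 0 < ξ) :
    fourierHankel (((a - 1) / 2 : ℝ) : ℂ) F ξ (-ξ ^ 2 / (2 * Real.pi)) =
      ((2 : ℝ) ^ (-((a - 1) / 2)) : ℝ) * parabolaTransform a (fun t x => F x t) ξ := by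
  rw [fourierHankel, parabolaTransform, ← integral_const_mul]
  refine integral_congr_ae (ae_of_all _ fun t => ?_)
  have hphase : -((2 * Real.pi * (-ξ ^ 2 / (2 * Real.pi)) * t : ℝ) : ℂ) = (ξ ^ 2 * t : ℝ) := by
    rw [← Complex.ofReal_neg]
    congr 1
    field_simp
  simp only [hphase, hankel_eq_besselTransform a _ hξ]
  ring

end FourierHankel

section RealNorms

variable {a q r : ℝ}

lemma integral_norm_rpow_eq_toReal_lintegral {α E : Type*} [MeasurableSpace α] {μ : Measure α}
    [NormedAddCommGroup E] {f : α → E} (hf : AEStronglyMeasurable f μ) (hr : 0 ≤ r) :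
    ∫ x, ‖f x‖ ^ r ∂μ = (∫⁻ x, ‖f x‖ₑ ^ r ∂μ).toReal := by
  rw [integral_eq_lintegral_of_nonneg_ae (ae_of_all _ fun x => by positivity)
    (hf.norm.aemeasurable.pow_const r).aestronglyMeasurable]
  simp only [← ofReal_norm, ENNReal.ofReal_rpow_of_nonneg (norm_nonneg _) hr]

lemma LrA_eq_toReal_eLpNorm' {f : ℝ → ℂ} (hf : AEStronglyMeasurable f (powMeasure a))
    (hr : 0 ≤ r) : LrA a r f = (eLpNorm' f r (powMeasure a)).toReal := by
  rw [eLpNorm'_eq_lintegral_enorm, ← ENNReal.toReal_rpow,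
    ← integral_norm_rpow_eq_toReal_lintegral hf hr, integral_powMeasure]
  simp only [LrA, smul_eq_mul, mul_comm]

lemma mixedNorm_eq_toReal_eMixedNorm {F : ℝ → ℝ → ℂ} (hq : 0 < q) (hr : 0 ≤ r)
    (hF : AEStronglyMeasurable (Function.uncurry fun t x => F x t) (volume.prod (powMeasure a)))
    (hfin : eMixedNorm a q r (fun t x => F x t) ≠ ⊤) :
    mixedNorm a q r F = (eMixedNorm a q r fun t x => F x t).toReal := by
  rw [eMixedNorm_eq_lintegral, ← ENNReal.toReal_rpow, mixedNorm,
    ← integral_toReal ((aemeasurable_eLpNorm'_slice hF r).pow_const q)]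
  · congr 1
    refine integral_congr_ae ?_
    filter_upwards [hF.prodMk_left] with t ht
    rw [Function.uncurry_def] at ht
    rw [LrA_eq_toReal_eLpNorm' ht hr, ENNReal.toReal_rpow]
  · filter_upwards [eLpNorm'_slice_ne_top_ae hq hF hfin] with t ht
    exact ENNReal.rpow_lt_top_of_nonneg hq.le ht

lemma integral_norm_fourierHankel_sq (ha : 0 ≤ a) {F : ℝ → ℝ → ℂ}
    (hF : AEStronglyMeasurable (Function.uncurry fun t x => F x t)
      (volume.prod (powMeasure a))) :
    ∫ ξ in Ioi (0 : ℝ),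
        ‖fourierHankel (((a - 1) / 2 : ℝ) : ℂ) F ξ (-ξ ^ 2 / (2 * Real.pi))‖ ^ 2 * ξ ^ a =
      (2 ^ (-((a - 1) / 2))) ^ 2 *
        (∫⁻ ξ, ‖parabolaTransform a (fun t x => F x t) ξ‖ₑ ^ 2 ∂powMeasure a).toReal := by
  have hsq := integral_norm_rpow_eq_toReal_lintegral
    (stronglyMeasurable_parabolaTransform ha hF).aestronglyMeasurable (μ := powMeasure a)
    zero_le_two
  simp only [Real.rpow_two, ENNReal.rpow_two] at hsq
  rw [← hsq, integral_powMeasure, ← integral_const_mul]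
  refine setIntegral_congr_fun measurableSet_Ioi fun ξ (hξ : 0 < ξ) => ?_
  simp only [fourierHankel_eq_parabolaTransform a F hξ, norm_mul, Complex.norm_real,
    Real.norm_of_nonneg (Real.rpow_nonneg zero_le_two _), smul_eq_mul]
  ring

lemma Admissible.two_lt (ha : 0 ≤ a) (h : Admissible a q r) : 2 < q := by
  obtain ⟨hr, hra, hqr⟩ := h
  have hpos : 0 < 2 / q := by
    rw [hqr]
    have : 1 / r < 1 / 2 := one_div_lt_one_div_of_lt two_pos hr
    exact mul_pos (by linarith) (by linarith)
  have hq : 0 < q := (div_pos_iff_of_pos_left two_pos).1 hpos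
  have hlt : 2 / q < 1 := by
    have hdiv : (a + 1) * (1 / 2 - 1 / r) = ((a + 1) * (r - 2)) / (2 * r) := by field_simp
    rw [hqr, hdiv, div_lt_one (by positivity)]
    rcases le_or_gt a 1 with ha1 | ha1
    · nlinarith
    · have := (lt_div_iff₀ (by linarith)).1 (hra ha1)
      nlinarith
  rwa [div_lt_one hq] at hlt

end RealNorms

theorem restriction_estimate_general (a q r : ℝ) (ha : 0 ≤ a) (hadm : Admissible a q r) :
    ∃ C > (0 : ℝ), ∀ F : ℝ → ℝ → ℂ,
      Integrable (Function.uncurry fun t x => F x t) (volume.prod (powMeasure a)) →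
      eMixedNorm a (q / (q - 1)) (r / (r - 1)) (fun t x => F x t) ≠ ⊤ →
      (∫ ξ in Ioi (0 : ℝ),
          ‖fourierHankel (((a - 1) / 2 : ℝ) : ℂ) F ξ (-ξ ^ 2 / (2 * Real.pi))‖ ^ 2 * ξ ^ a) ^
          ((1 : ℝ) / 2) ≤
        C * mixedNorm a (q / (q - 1)) (r / (r - 1)) F := by
  have hq := hadm.two_lt ha
  obtain ⟨hr, -, hqr⟩ := hadm
  have hqq' : q.HolderConjugate (q / (q - 1)) := .conjExponent (by linarith)
  have hrr' : r.HolderConjugate (r / (r - 1)) := .conjExponent (by linarith)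
  obtain ⟨K, hK, hbound⟩ := exists_lintegral_enorm_parabolaTransform_sq_le ha hr hrr' hq hqq' hqr
  refine ⟨2 ^ (-((a - 1) / 2)) * √K.toReal + 1, by positivity, fun F hF hfin => ?_⟩
  rw [integral_norm_fourierHankel_sq ha hF.1, ← Real.sqrt_eq_rpow,
    mixedNorm_eq_toReal_eMixedNorm hqq'.symm.pos hrr'.symm.nonneg hF.1 hfin]
  set c : ℝ := 2 ^ (-((a - 1) / 2))
  have hc : 0 < c := by positivity
  set N : ENNReal := eMixedNorm a (q / (q - 1)) (r / (r - 1)) fun t x => F x t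
  have hsq := ENNReal.toReal_mono (by finiteness) (hbound _ hF hfin)
  calc _ ≤ √(c ^ 2 * (K * N ^ 2).toReal) := by gcongr
    _ = c * √K.toReal * N.toReal := by
        rw [ENNReal.toReal_mul, ENNReal.toReal_pow, Real.sqrt_mul (by positivity),
          Real.sqrt_mul (by positivity), Real.sqrt_sq hc.le, Real.sqrt_sq (by positivity),
          mul_assoc]
    _ ≤ (c * √K.toReal + 1) * N.toReal := by gcongr; linarith

section Decay

variable {a : ℝ} {F : ℝ → ℝ → ℂ}

lemma rpow_mul_one_add_sq_le {x : ℝ} (hx : 0 < x) {m : ℕ} (ha : 0 ≤ a) (hm : a / 2 + 1 ≤ m) :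
    x ^ a * (1 + x ^ 2) ≤ (1 + x ^ 2) ^ m := by
  have hpow : x ^ a = (x ^ 2) ^ (a / 2) := by
    rw [← Real.rpow_natCast_mul hx.le]
    congr 1
    push_cast
    ring
  calc x ^ a * (1 + x ^ 2) ≤ (1 + x ^ 2) ^ (a / 2) * (1 + x ^ 2) := by
        rw [hpow]
        gcongr
        linarith
    _ = (1 + x ^ 2) ^ (a / 2 + 1) := by rw [Real.rpow_add_one (by positivity)]
    _ ≤ (1 + x ^ 2) ^ (m : ℝ) := Real.rpow_le_rpow_of_exponent_le (by nlinarith) hm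
    _ = (1 + x ^ 2) ^ m := Real.rpow_natCast _ _

lemma integrable_inv_one_add_sq_pow_powMeasure (ha : 0 ≤ a) {m : ℕ} (hm : a / 2 + 1 ≤ m) :
    Integrable (fun x : ℝ => ((1 + x ^ 2) ^ m)⁻¹) (powMeasure a) := by
  rw [integrable_powMeasure_iff]
  refine (integrable_inv_one_add_sq.integrableOn (s := Ioi 0)).mono'
    (Measurable.aestronglyMeasurable (by fun_prop)) ?_
  filter_upwards [ae_restrict_mem measurableSet_Ioi] with x (hx : 0 < x)
  rw [smul_eq_mul, Real.norm_of_nonneg (by positivity), ← div_eq_mul_inv,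
    div_le_iff₀ (by positivity), inv_mul_eq_div, le_div_iff₀ (by positivity)]
  exact rpow_mul_one_add_sq_le hx ha hm

lemma eLpNorm'_ne_top_of_integrable_of_norm_le {α E : Type*} [MeasurableSpace α] {μ : Measure α}
    [NormedAddCommGroup E] {f : α → E} (hf : Integrable f μ) {C : ℝ} (hC : ∀ x, ‖f x‖ ≤ C)
    {r : ℝ} (hr : 1 ≤ r) : eLpNorm' f r μ ≠ ⊤ := by
  have hpow : ∀ x, ‖f x‖ₑ ^ r ≤ ENNReal.ofReal C ^ (r - 1) * ‖f x‖ₑ := fun x => by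
    have hC' : ‖f x‖ₑ ≤ ENNReal.ofReal C := by
      rw [← ofReal_norm]
      exact ENNReal.ofReal_le_ofReal (hC x)
    calc ‖f x‖ₑ ^ r = ‖f x‖ₑ ^ (r - 1) * ‖f x‖ₑ := by
          nth_rw 3 [← ENNReal.rpow_one ‖f x‖ₑ]
          rw [← ENNReal.rpow_add_of_nonneg _ _ (by linarith) zero_le_one, sub_add_cancel]
      _ ≤ _ := by gcongr
  rw [eLpNorm'_eq_lintegral_enorm]
  refine ENNReal.rpow_ne_top_of_nonneg (by positivity)
    (ne_top_of_le_ne_top ?_ (lintegral_mono hpow))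
  rw [lintegral_const_mul'' _ hf.1.enorm]
  have := hf.2.ne
  finiteness

lemma eMixedNorm_le_of_norm_le_mul {q r : ℝ} (hq : 0 < q) (hr : 0 < r) {v : ℝ → ℝ → ℂ}
    {f g : ℝ → ℝ} (hf : AEMeasurable f) (h : ∀ t, ∀ᵐ x ∂powMeasure a, ‖v t x‖ ≤ f t * g x) :
    eMixedNorm a q r v ≤ eLpNorm' f q volume * eLpNorm' g r (powMeasure a) := by
  have hslice : ∀ t, eLpNorm' (v t) r (powMeasure a) ≤ ‖f t‖ₑ * eLpNorm' g r (powMeasure a) :=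
    fun t => (eLpNorm'_mono_ae hr.le ((h t).mono fun x hx => hx.trans (le_abs_self _))).trans_eq
      (eLpNorm'_const_smul (f t) hr)
  calc eMixedNorm a q r v
      ≤ (∫⁻ t, (‖f t‖ₑ * eLpNorm' g r (powMeasure a)) ^ q) ^ (1 / q) := by
        rw [eMixedNorm_eq_lintegral]
        gcongr with t
        exact hslice t
    _ = eLpNorm' f q volume * eLpNorm' g r (powMeasure a) := by
        simp only [ENNReal.mul_rpow_of_nonneg _ _ hq.le]
        rw [lintegral_mul_const'' _ (hf.enorm.pow_const q),
          ENNReal.mul_rpow_of_nonneg _ _ (by positivity), ← ENNReal.rpow_mul,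
          mul_one_div_cancel hq.ne', ENNReal.rpow_one, eLpNorm'_eq_lintegral_enorm f]

lemma SPlusT.exists_norm_le (hF : SPlusT F) (m : ℕ) :
    ∃ C : ℝ, ∀ x > 0, ∀ t, ‖F x t‖ ≤ C * (1 + t ^ 2)⁻¹ * ((1 + x ^ 2) ^ m)⁻¹ := by
  obtain ⟨C, hC⟩ := hF.2 (2 * (m + 1))
  refine ⟨C, fun x hx t => ?_⟩
  have hdecay : (1 + x ^ 2 + t ^ 2) ^ (m + 1) * ‖F x t‖ ≤ C := by
    have h := hC 0 0 (by omega) x hx t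
    simp only [DxIter, DtIter, iteratedDeriv_zero] at h
    rwa [show ((2 * (m + 1) : ℕ) : ℝ) / 2 = ((m + 1 : ℕ) : ℝ) by push_cast; ring,
      Real.rpow_natCast] at h
  rw [mul_assoc, ← mul_inv, ← div_eq_mul_inv, le_div_iff₀ (by positivity), mul_comm]
  refine le_trans ?_ hdecay
  rw [pow_succ' (1 + x ^ 2 + t ^ 2)]
  gcongr ?_ * ?_ ^ m * _ <;> nlinarith

lemma SPlusT.aestronglyMeasurable (hF : SPlusT F) (a : ℝ) :
    AEStronglyMeasurable (Function.uncurry fun t x => F x t) (volume.prod (powMeasure a)) := by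
  have hcont : ContinuousOn (Function.uncurry fun t x => F x t) (univ ×ˢ Ioi 0) :=
    hF.1.continuousOn.comp continuous_swap.continuousOn fun _ h => ⟨h.2, h.1⟩
  refine ⟨(univ ×ˢ Ioi 0).piecewise _ fun _ => 0, (hcont.measurable_piecewise continuousOn_const
    (MeasurableSet.univ.prod measurableSet_Ioi)).stronglyMeasurable, ?_⟩
  filter_upwards [Measure.quasiMeasurePreserving_snd.ae (ae_powMeasure_pos a)] with z hz
  exact (piecewise_eq_of_mem (univ ×ˢ Ioi 0) _ _ ⟨mem_univ z.1, hz⟩).symm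

lemma SPlusT.integrable (hF : SPlusT F) (ha : 0 ≤ a) :
    Integrable (Function.uncurry fun t x => F x t) (volume.prod (powMeasure a)) := by
  obtain ⟨m, hm⟩ := exists_nat_ge (a / 2 + 1)
  obtain ⟨C, hC⟩ := hF.exists_norm_le m
  refine ((integrable_inv_one_add_sq.const_mul C).mul_prod
    (integrable_inv_one_add_sq_pow_powMeasure ha hm)).mono' (hF.aestronglyMeasurable a) ?_
  filter_upwards [Measure.quasiMeasurePreserving_snd.ae (ae_powMeasure_pos a)] with z hz
  exact hC z.2 hz z.1

lemma SPlusT.eMixedNorm_ne_top (hF : SPlusT F) (ha : 0 ≤ a) {q r : ℝ} (hq : 1 ≤ q) (hr : 1 ≤ r) :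
    eMixedNorm a q r (fun t x => F x t) ≠ ⊤ := by
  obtain ⟨m, hm⟩ := exists_nat_ge (a / 2 + 1)
  obtain ⟨C, hC⟩ := hF.exists_norm_le m
  have htime : eLpNorm' (fun t : ℝ => C * (1 + t ^ 2)⁻¹) q volume ≠ ⊤ := by
    refine eLpNorm'_ne_top_of_integrable_of_norm_le (C := |C|)
      (integrable_inv_one_add_sq.const_mul C) (fun t => ?_) hq
    rw [norm_mul, Real.norm_eq_abs, Real.norm_of_nonneg (by positivity)]
    exact mul_le_of_le_one_right (abs_nonneg C) (inv_le_one_of_one_le₀ (by nlinarith))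
  have hspace : eLpNorm' (fun x : ℝ => ((1 + x ^ 2) ^ m)⁻¹) r (powMeasure a) ≠ ⊤ := by
    refine eLpNorm'_ne_top_of_integrable_of_norm_le (C := 1)
      (integrable_inv_one_add_sq_pow_powMeasure ha hm) (fun x => ?_) hr
    rw [Real.norm_of_nonneg (by positivity)]
    exact inv_le_one_of_one_le₀ (one_le_pow₀ (by nlinarith))
  refine ne_top_of_le_ne_top (ENNReal.mul_ne_top htime hspace)
    (eMixedNorm_le_of_norm_le_mul (by linarith) (by linarith) (by fun_prop) fun t => ?_)
  filter_upwards [ae_powMeasure_pos a] with x hx using hC x hx t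

end Decay

/-- Restriction estimate on the half-parabola: for `a ≥ 0` and an `a`-admissible pair `(q,r)`,
`(∫₀^∞ |𝓗̃_{(a-1)/2}(F)(ξ,-ξ²/(2π))|² ξ^a dξ)^{1/2} ≤ C(a,r) ‖F‖_{L^{q'}_t L^{r'}_a}`. -/
theorem restriction_estimate (a q r : ℝ) (ha : 0 ≤ a) (hadm : Admissible a q r) :
    ∃ C > (0:ℝ), ∀ F : ℝ → ℝ → ℂ, SPlusT F →
      (∫ ξ in Ioi (0:ℝ),
          ‖fourierHankel (((a - 1) / 2 : ℝ) : ℂ) F ξ (-ξ ^ 2 / (2 * Real.pi))‖ ^ 2 * ξ ^ a) ^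
          ((1:ℝ) / 2) ≤
        C * mixedNorm a (q / (q - 1)) (r / (r - 1)) F := by
  have hq : 1 < q := one_lt_two.trans (hadm.two_lt ha)
  have hr : 1 < r := one_lt_two.trans hadm.1
  obtain ⟨C, hC, hbound⟩ := restriction_estimate_general a q r ha hadm
  exact ⟨C, hC, fun F hF => hbound F (hF.integrable ha) (hF.eMixedNorm_ne_top ha
    (Real.HolderConjugate.conjExponent hq).symm.lt.le
    (Real.HolderConjugate.conjExponent hr).symm.lt.le)⟩
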